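/- arXiv:2006.08588 — 2 statements merged into one kernel-verified Lean document; each statement's English description precedes it below -/
import Mathlib

section
/- Let F be a field and let A and B be commuting k×k matrices over F such that the F-vector space dimension of the unital subalgebra generated by A and B equals k. Then every k×k matrix X over F that commutes with both A and B lies in that subalgebra, i.e. X is an element of Algebra.adjoin F {A, B}. -/
/-!
Split `V = F^k` over the commutative Artinian algebra `S = F[A, B]` into its primary parts; each is
a module over a local Artinian ring `R` whose maximal ideal is generated by two elements `x`, `y`.

If `V / xV` has length `n`, the Cayley–Hamilton trick puts `y ^ n` in `(x) + ann V`, so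
`R / ((x) + ann V)` has length at most `n`. Adding this to the same estimate for `xV` in place of
`V` bounds the length of `R / ann V` by that of `V`; since the dimensions of `S` and `V` agree, all
these inequalities are equalities.

In the case of equality every endomorphism of `V` is a homothety. With `n + 1` now the length of
`V / xV`, which is also that of `ker x`, there are three cases. If `y ^ n` does not kill `ker x`,
then `V` is cocyclic and `Hom(V, V)` is no longer than `V`, hence no longer than `R / ann V`. If
`y ^ n` does not map `V` into `xV`, then `V` is cyclic. Otherwise `x v ↦ y ^ n v` is a well-defined
endomorphism of `xV`, a homothety by induction, so `y ^ n` lies in `(x) + ann V`, against equality.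
-/

open IsLocalRing Submodule Function
open scoped Pointwise

section Length

variable {R L M N : Type*} [Ring R] [AddCommGroup L] [Module R L] [AddCommGroup M] [Module R M]
  [AddCommGroup N] [Module R N]

lemma length_eq_length_add_length_quotient (N : Submodule R M) :
    Module.length R M = Module.length R N + Module.length R (M ⧸ N) :=
  Module.length_eq_add_of_exact N.subtype N.mkQ N.subtype_injective N.mkQ_surjective
    (LinearMap.exact_subtype_mkQ N)

lemma length_le_add_of_exact {f : L →ₗ[R] M} {g : M →ₗ[R] N}
    (hf : Injective f) (hfg : Exact f g) :
    Module.length R M ≤ Module.length R L + Module.length R N := by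
  have hexact : Exact f g.rangeRestrict := by
    rw [LinearMap.exact_iff] at hfg ⊢
    rw [LinearMap.ker_rangeRestrict, hfg]
  rw [Module.length_eq_add_of_exact f _ hf g.surjective_rangeRestrict hexact]
  gcongr
  exact Module.length_le_of_injective _ g.range.subtype_injective

lemma length_eq_length_add_one_of_covBy {N P : Submodule R M} (h : N ⋖ P) :
    Module.length R P = Module.length R N + 1 := by
  have hsimple : IsSimpleModule R (P ⧸ N.submoduleOf P) := (covBy_iff_quot_is_simple h.le).1 h
  rw [length_eq_length_add_length_quotient (N.submoduleOf P),
    (submoduleOfEquivOfLe h.le).length_eq, Module.length_eq_one_iff.2 hsimple]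

lemma exists_covBy_of_length_eq_add_one {N : Submodule R M} {n : ℕ}
    (h : Module.length R N = n + 1) : ∃ P, P ⋖ N ∧ Module.length R P = n := by
  simp_rw [Module.length_submodule] at h ⊢
  obtain ⟨-, ⟨P, hPN, hP⟩, -⟩ := Order.height_eq_coe_add_one_iff.1 h
  refine ⟨P, ⟨hPN, fun U hPU hUN => ?_⟩, hP⟩
  have hU : Order.height U < ⊤ :=
    ((Order.height_mono hUN.le).trans_eq h).trans_lt (by exact_mod_cast ENat.natCast_lt_top (n + 1))
  have hlt := (Order.add_one_le_of_lt (Order.height_strictMono hPU (hP ▸ ENat.natCast_lt_top n)))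
  have hlt' := Order.height_strictMono hUN hU
  rw [hP] at hlt
  exact (hlt'.trans_eq h).not_ge hlt

lemma eq_top_of_length_le [IsArtinian R M] [IsNoetherian R M] {N : Submodule R M}
    (h : Module.length R M ≤ Module.length R N) : N = ⊤ := by
  by_contra hN
  exact (N.length_lt hN).not_ge h

lemma length_ker_eq_length_quotient_range [IsArtinian R M] [IsNoetherian R M]
    (f : Module.End R M) :
    Module.length R f.ker = Module.length R (M ⧸ f.range) := by
  have hker := length_eq_length_add_length_quotient f.ker
  rw [f.quotKerEquivRange.length_eq, length_eq_length_add_length_quotient f.range, add_comm] at hker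
  exact (ENat.add_left_injective_of_ne_top Module.length_ne_top hker).symm

lemma exists_linearMap_comp_rangeRestrict_eq {f : L →ₗ[R] M} {g : L →ₗ[R] N}
    (h : f.ker ≤ g.ker) : ∃ φ : f.range →ₗ[R] N, φ ∘ₗ f.rangeRestrict = g :=
  ⟨f.ker.liftQ g h ∘ₗ f.quotKerEquivRange.symm, LinearMap.ext fun v => by
    have : f.quotKerEquivRange.symm (f.rangeRestrict v) = f.ker.mkQ v := by
      rw [LinearEquiv.symm_apply_eq]; rfl
    simp [this]⟩

end Length

section CyclicSubmodule

variable {R M : Type*} [CommRing R] [IsLocalRing R] [AddCommGroup M] [Module R M] {x y : R} {w : M}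

lemma eq_zero_of_eq_smul_of_mem_maximalIdeal {r : R} (hr : r ∈ maximalIdeal R) (h : w = r • w) :
    w = 0 := by
  have hunit : IsUnit (1 - r) := isUnit_one_sub_self_of_mem_nonunits r hr
  rw [← hunit.smul_eq_zero, sub_smul, one_smul, ← h, sub_self]

lemma smul_mem_span_singleton_smul (hxy : maximalIdeal R = Ideal.span {x, y}) (hxw : x • w = 0)
    {r : R} (hr : r ∈ maximalIdeal R) : r • w ∈ span R {y • w} := by
  rw [hxy, Ideal.mem_span_pair] at hr
  obtain ⟨a, b, rfl⟩ := hr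
  rw [add_smul, mul_smul, mul_smul, hxw, smul_zero, zero_add]
  exact smul_mem _ b (mem_span_singleton_self _)

lemma span_singleton_smul_covBy (hxy : maximalIdeal R = Ideal.span {x, y}) (hxw : x • w = 0)
    (hw : w ≠ 0) : span R {y • w} ⋖ span R {w} := by
  have hy : y ∈ maximalIdeal R := hxy ▸ Ideal.subset_span (by simp)
  refine ⟨lt_of_le_of_ne (span_singleton_smul_le R y w) fun heq => hw ?_,
    fun U hlt hU => hU.not_ge ?_⟩
  · obtain ⟨r, hr⟩ := mem_span_singleton.1 (heq ▸ mem_span_singleton_self w)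
    refine eq_zero_of_eq_smul_of_mem_maximalIdeal (Ideal.mul_mem_left _ r hy) ?_
    rw [mul_smul, hr]
  · obtain ⟨u, huU, hu⟩ := SetLike.exists_of_lt hlt
    obtain ⟨r, rfl⟩ := mem_span_singleton.1 (hU.le huU)
    have hr : IsUnit r := by
      by_contra hr
      exact hu (smul_mem_span_singleton_smul hxy hxw hr)
    rw [span_singleton_le_iff_mem]
    exact (smul_mem_iff_of_isUnit _ hr).1 huU

lemma length_span_singleton_le_iff_pow_smul_eq_zero (hxy : maximalIdeal R = Ideal.span {x, y})
    (hxw : x • w = 0) {n : ℕ} : Module.length R (span R {w}) ≤ n ↔ y ^ n • w = 0 := by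
  induction n generalizing w with
  | zero =>
    simp [Module.length_eq_zero_iff, subsingleton_iff_eq_bot]
  | succ n ih =>
    by_cases hw : w = 0
    · have : Subsingleton (span R {w}) := subsingleton_iff_eq_bot.2 (by simp [hw])
      simp [hw]
    · rw [length_eq_length_add_one_of_covBy (span_singleton_smul_covBy hxy hxw hw), pow_succ,
        mul_smul, ← ih (by rw [smul_comm, hxw, smul_zero]), Nat.cast_succ]
      exact ENat.add_le_add_iff_right ENat.one_ne_top

lemma pow_smul_mem_span_singleton (hxy : maximalIdeal R = Ideal.span {x, y}) (hxw : x • w = 0)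
    {n : ℕ} (hn : y ^ (n + 1) • w = 0) {v : M} (hv : v ∈ span R {w}) (hv0 : v ≠ 0) :
    y ^ n • w ∈ span R {v} := by
  induction n generalizing w with
  | zero =>
    obtain ⟨r, rfl⟩ := mem_span_singleton.1 hv
    by_cases hr : IsUnit r
    · simp [span_singleton_smul_eq hr, mem_span_singleton_self]
    · have hzero : r • w = 0 := by
        rw [zero_add, pow_one] at hn
        simpa only [hn, span_zero_singleton, mem_bot] using smul_mem_span_singleton_smul hxy hxw hr
      exact absurd hzero hv0
  | succ n ih =>
    obtain ⟨r, rfl⟩ := mem_span_singleton.1 hv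
    by_cases hr : IsUnit r
    · rw [span_singleton_smul_eq hr]
      exact smul_mem _ _ (mem_span_singleton_self w)
    · rw [pow_succ, mul_smul]
      exact ih (by rw [smul_comm, hxw, smul_zero]) (by rwa [← mul_smul, ← pow_succ])
        (smul_mem_span_singleton_smul hxy hxw hr)

lemma span_singleton_eq_top_of_pow_smul_ne_zero (hxy : maximalIdeal R = Ideal.span {x, y}) {n : ℕ}
    (hlen : Module.length R M ≤ n + 1) {w : M} (hxw : x • w = 0) (hw : y ^ n • w ≠ 0) :
    span R {w} = ⊤ := by
  have hfin : IsFiniteLength R M :=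
    Module.length_ne_top_iff.1 (ne_top_of_le_ne_top (ENat.natCast_ne_top (n + 1))
      (by exact_mod_cast hlen))
  obtain ⟨_, _⟩ := isFiniteLength_iff_isNoetherian_isArtinian.1 hfin
  refine eq_top_of_length_le (hlen.trans (Order.add_one_le_of_lt (lt_of_not_ge ?_)))
  rwa [length_span_singleton_le_iff_pow_smul_eq_zero hxy hxw]

end CyclicSubmodule

section TriangularGenerators

variable {R M : Type*} [CommRing R] [AddCommGroup M] [Module R M]

lemma det_smul_eq_zero {ι : Type*} [Fintype ι] [DecidableEq ι] {D : Matrix ι ι R}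
    {w : ι → M} (h : ∀ i, ∑ j, D i j • w j = 0) (i : ι) : D.det • w i = 0 :=
  calc D.det • w i = ∑ j, (D.adjugate * D) i j • w j := by
        simp [Matrix.adjugate_mul, Matrix.smul_apply, Matrix.one_apply]
    _ = ∑ k, D.adjugate i k • ∑ j, D k j • w j := by
        simp_rw [Matrix.mul_apply, Finset.sum_smul, Finset.smul_sum, mul_smul]
        exact Finset.sum_comm
    _ = 0 := by simp [h]

lemma exists_triangular_coeff {I : Ideal R} {n : ℕ} {w : Fin n → M}
    (hspan : span R (Set.range w) = ⊤) {i : Fin n} {v : M}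
    (hv : v ∈ span R (w '' Set.Iio i) ⊔ I • ⊤) :
    ∃ c : Fin n → R, (∀ j, i ≤ j → c j ∈ I) ∧ ∑ j, c j • w j = v := by
  obtain ⟨u, hu, z, hz, rfl⟩ := mem_sup.1 hv
  obtain ⟨a, ha, rfl⟩ := (Finsupp.mem_span_image_iff_linearCombination R).1 hu
  rw [← hspan] at hz
  obtain ⟨b, hb, rfl⟩ := (mem_ideal_smul_span_iff_exists_sum I w z).1 hz
  refine ⟨a + b, fun j hij => ?_, ?_⟩
  · have : a j = 0 := by_contra fun h => hij.not_gt (ha (Finsupp.mem_support_iff.2 h))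
    simpa [this] using hb j
  · simp [add_smul, Finset.sum_add_distrib, Finsupp.linearCombination_apply, Finsupp.sum_fintype]

variable [IsLocalRing R]

lemma smul_mem_of_covBy {N P : Submodule R M} (h : P ⋖ N) {r : R}
    (hr : r ∈ maximalIdeal R) {w : M} (hw : w ∈ N) : r • w ∈ P := by
  by_contra hrw
  have hmem : w ∈ P ⊔ span R {r • w} := by
    rwa [(h.eq_or_eq le_sup_left (sup_le h.le ?_)).resolve_left (by simpa using hrw)]
    simpa using N.smul_mem r hw
  obtain ⟨p, hp, s, hs⟩ := by simpa [mem_sup, mem_span_singleton] using hmem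
  have hunit : IsUnit (1 - s * r) :=
    isUnit_one_sub_self_of_mem_nonunits _ (Ideal.mul_mem_left _ s hr)
  refine hrw (P.smul_mem r ((smul_mem_iff_of_isUnit P hunit).1 ?_))
  rwa [sub_smul, one_smul, mul_smul, sub_eq_of_eq_add hs.symm]

lemma exists_triangular_span_eq {n : ℕ} {N : Submodule R M}
    (h : Module.length R N = n) :
    ∃ w : Fin n → M, span R (Set.range w) = N ∧
      ∀ i, ∀ r ∈ maximalIdeal R, r • w i ∈ span R (w '' Set.Iio i) := by
  induction n generalizing N with
  | zero =>
    rw [Nat.cast_zero, Module.length_eq_zero_iff, subsingleton_iff_eq_bot] at h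
    exact ⟨Fin.elim0, by simp [h], fun i => i.elim0⟩
  | succ n ih =>
    obtain ⟨P, hPN, hP⟩ := exists_covBy_of_length_eq_add_one (by exact_mod_cast h)
    obtain ⟨w, rfl, hw⟩ := ih hP
    obtain ⟨e, heN, heP⟩ := SetLike.exists_of_lt hPN.lt
    refine ⟨Fin.snoc w e, ?_, Fin.lastCases ?_ fun i => ?_⟩
    · rw [Fin.range_snoc, span_insert]
      exact (hPN.eq_or_eq le_sup_right (sup_le (by simpa using heN) hPN.le)).resolve_left
        (by simpa using heP)
    · intro r hr
      have himage : (Fin.snoc w e : Fin (n + 1) → M) '' Set.Iio (Fin.last n) = Set.range w := by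
        ext; simp [Fin.exists_fin_succ', Fin.castSucc_lt_last]
      simpa [himage] using smul_mem_of_covBy hPN hr heN
    · simpa [← Fin.image_castSucc_Iio, Set.image_image] using hw i

lemma exists_triangular_span_eq_top [Module.Finite R M] {I : Ideal R}
    (hI : I ≤ maximalIdeal R) {n : ℕ}
    (h : Module.length R (M ⧸ (I • ⊤ : Submodule R M)) = n) :
    ∃ w : Fin n → M, span R (Set.range w) = ⊤ ∧
      ∀ i, ∀ r ∈ maximalIdeal R, r • w i ∈ span R (w '' Set.Iio i) ⊔ I • ⊤ := by
  have comap_eq (s : Set M) :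
      comap (I • ⊤ : Submodule R M).mkQ (span R (mkQ _ '' s)) = span R s ⊔ I • ⊤ := by
    rw [span_image, comap_map_mkQ, sup_comm]
  obtain ⟨w', hspan, hw'⟩ := exists_triangular_span_eq (N := ⊤) (Module.length_top.trans h)
  obtain ⟨w, rfl⟩ := (mkQ_surjective _).comp_left w'
  refine ⟨w, top_le_iff.1 (le_of_le_smul_of_le_jacobson_bot Module.Finite.fg_top
    (hI.trans (maximalIdeal_le_jacobson ⊥)) ?_), fun i r hr => ?_⟩
  · rw [Set.range_comp] at hspan
    rw [← comap_eq, hspan, comap_top]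
  · rw [← comap_eq, mem_comap, map_smul]
    simpa [Set.image_comp] using hw' i r hr

theorem pow_mem_sup_annihilator [Module.Finite R M] {I : Ideal R}
    (hI : I ≤ maximalIdeal R) {n : ℕ}
    (h : Module.length R (M ⧸ (I • ⊤ : Submodule R M)) = n) {y : R} (hy : y ∈ maximalIdeal R) :
    y ^ n ∈ I ⊔ Module.annihilator R M := by
  -- Modulo `I` the matrix `c` of `y` is strictly triangular, so `det (y - c)`, which kills `M`,
  -- is congruent to `y ^ n`.
  obtain ⟨w, hspan, hw⟩ := exists_triangular_span_eq_top hI h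
  choose c hcI hc using fun i => exists_triangular_coeff hspan (hw i y hy)
  let D : Matrix (Fin n) (Fin n) R := y • 1 - Matrix.of c
  have hdet : y ^ n - D.det ∈ I := by
    have hlower : (D.map (Ideal.Quotient.mk I)).IsLowerTriangular := fun i j hij => by
      have : c i j ∈ I := hcI i j (le_of_lt hij)
      have hne : i ≠ j := ne_of_lt hij
      simpa [D, Matrix.one_apply, hne, Ideal.Quotient.eq_zero_iff_mem] using this
    rw [← Ideal.Quotient.eq, RingHom.map_det, RingHom.mapMatrix_apply,
      Matrix.det_of_isLowerTriangular _ hlower]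
    have hdiag (i) : Ideal.Quotient.mk I (c i i) = 0 :=
      Ideal.Quotient.eq_zero_iff_mem.2 (hcI i i le_rfl)
    simp [D, hdiag]
  have hann : D.det ∈ Module.annihilator R M := by
    have hD (i) : D.det • w i = 0 := det_smul_eq_zero (fun i => by
      simp [D, sub_smul, Finset.sum_sub_distrib, hc, Matrix.one_apply, ite_smul]) i
    rw [← annihilator_top, ← hspan, mem_annihilator_span]
    rintro ⟨-, i, rfl⟩
    exact hD i
  rw [← sub_add_cancel (y ^ n) D.det]
  exact add_mem (Ideal.mem_sup_left hdet) (Ideal.mem_sup_right hann)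

end TriangularGenerators

section Homothety

variable {R M V : Type*} [CommRing R] [AddCommGroup M] [Module R M] [AddCommGroup V] [Module R V]

lemma surjective_algebraMap_end_of_span_singleton_eq_top {e : V} (he : span R {e} = ⊤) :
    Surjective (algebraMap R (Module.End R V)) := by
  intro f
  obtain ⟨r, hr⟩ := (span_singleton_eq_top_iff R e).1 he (f e)
  refine ⟨r, LinearMap.ext fun v => ?_⟩
  obtain ⟨s, rfl⟩ := (span_singleton_eq_top_iff R e).1 he v
  rw [Module.algebraMap_end_apply, map_smul, ← hr, smul_comm]

variable (R V) in
/-- A cocyclic module: some nonzero element lies in every nonzero submodule. Dual to cyclic modules,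
these share with injective hulls of simple modules the property that `Hom(-, V)` does not increase
length. -/
def IsCocyclic : Prop :=
  ∃ u : V, u ≠ 0 ∧ ∀ v : V, v ≠ 0 → u ∈ span R {v}

lemma length_linearMap_le_one (hV : IsCocyclic R V) [IsSimpleModule R M] :
    Module.length R (M →ₗ[R] V) ≤ 1 := by
  obtain ⟨u, hu0, hu⟩ := hV
  have mem_range {f : M →ₗ[R] V} (hf : f ≠ 0) : ∃ m, f m = u := by
    obtain ⟨m, hm⟩ := DFunLike.ne_iff.1 hf
    obtain ⟨r, hr⟩ := mem_span_singleton.1 (hu _ hm)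
    exact ⟨r • m, by rw [map_smul, hr]⟩
  rcases subsingleton_or_nontrivial (M →ₗ[R] V) with _ | _
  · simp [Module.length_eq_zero]
  obtain ⟨f, hf⟩ := exists_ne (0 : M →ₗ[R] V)
  obtain ⟨m, rfl⟩ := mem_range hf
  have apply_mem_range (g : M →ₗ[R] V) : g m ∈ f.range := by
    by_cases hg : g = 0
    · simp [hg]
    obtain ⟨m', hm'⟩ := mem_range hg
    have hm'0 : m' ≠ 0 := fun h => hu0 (by rw [← hm', h, map_zero])
    obtain ⟨r, rfl⟩ := (span_singleton_eq_top_iff R m').1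
      (IsSimpleModule.span_singleton_eq_top R hm'0) m
    exact ⟨r • r • m', by rw [map_smul, ← hm', map_smul]⟩
  have eval_injective : Injective
      ((LinearMap.applyₗ m).codRestrict f.range apply_mem_range) := by
    rw [injective_iff_map_eq_zero]
    refine fun g hg => (LinearMap.injective_or_eq_zero g).resolve_left fun hinj => hu0 ?_
    have hgm : g m = 0 := congrArg Subtype.val hg
    rw [(map_eq_zero_iff g hinj).1 hgm, map_zero]
  calc Module.length R (M →ₗ[R] V) ≤ Module.length R f.range :=
        Module.length_le_of_injective _ eval_injective
    _ ≤ Module.length R M := Module.length_le_of_surjective _ f.surjective_rangeRestrict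
    _ = 1 := Module.length_eq_one R M

lemma length_linearMap_le (hV : IsCocyclic R V) (hM : IsFiniteLength R M) :
    Module.length R (M →ₗ[R] V) ≤ Module.length R M := by
  induction hM with
  | of_subsingleton => simp [Module.length_eq_zero]
  | @of_simple_quotient M _ _ N _ _ ih =>
    rw [length_eq_length_add_length_quotient N, Module.length_eq_one R (M ⧸ N), add_comm]
    exact (length_le_add_of_exact (LinearMap.lcomp_injective_of_surjective _ N.mkQ_surjective)
      (LinearMap.exact_lcomp_of_exact_of_surjective V (LinearMap.exact_subtype_mkQ N)
        N.mkQ_surjective)).trans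
      (add_le_add (length_linearMap_le_one hV) ih)

theorem surjective_algebraMap_end_of_isCocyclic (hV : IsCocyclic R V) (hfin : IsFiniteLength R V)
    (hlen : Module.length R V ≤ Module.length R (R ⧸ Module.annihilator R V)) :
    Surjective (algebraMap R (Module.End R V)) := by
  let φ : R →ₗ[R] Module.End R V := Algebra.linearMap R (Module.End R V)
  have hker : φ.ker = Module.annihilator R V := by
    ext r
    simp [φ, Module.mem_annihilator, LinearMap.ext_iff]
  have hend := length_linearMap_le hV hfin
  have hendfin : IsFiniteLength R (Module.End R V) :=
    Module.length_ne_top_iff.1 (ne_top_of_le_ne_top (Module.length_ne_top_iff.2 hfin) hend)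
  obtain ⟨_, _⟩ := isFiniteLength_iff_isNoetherian_isArtinian.1 hendfin
  have hrange : φ.range = ⊤ := eq_top_of_length_le <| by
    rw [← φ.quotKerEquivRange.length_eq, hker]
    exact hend.trans hlen
  exact LinearMap.range_eq_top.1 hrange

end Homothety

section Multiplication

variable {R V : Type*} [CommRing R] [AddCommGroup V] [Module R V] {x y : R}

lemma length_quotient_annihilator_eq_add (x : R) :
    Module.length R (R ⧸ Module.annihilator R V) =
      Module.length R (R ⧸ Module.annihilator R (LinearMap.lsmul R V x).range) +
        Module.length R (R ⧸ Ideal.span {x} ⊔ Module.annihilator R V) := by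
  have hcomap : Module.annihilator R (LinearMap.lsmul R V x).range =
      Submodule.comap (LinearMap.mulLeft R x) (Module.annihilator R V) := by
    ext r
    simp [Module.mem_annihilator, Subtype.ext_iff, mul_smul, smul_comm r x]
  refine Module.length_eq_add_of_exact (mapQ _ _ (LinearMap.mulLeft R x) hcomap.le)
    (factor le_sup_right) ?_ (factor_surjective _) ?_
  · rw [← LinearMap.ker_eq_bot, ker_mapQ, ← hcomap, mkQ_map_self]
  · rw [LinearMap.exact_iff, range_mapQ, factor, ker_mapQ, comap_id, Submodule.map_sup,
      mkQ_map_self, sup_bot_eq]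
    congr 1
    ext r
    simp [Ideal.mem_span_singleton', mul_comm]

lemma range_lsmul_eq_smul_top (x : R) :
    (LinearMap.lsmul R V x).range = Ideal.span {x} • (⊤ : Submodule R V) := by
  rw [ideal_span_singleton_smul]
  ext; simp [mem_smul_pointwise_iff_exists]

lemma pow_mem_span_sup_annihilator {n : ℕ}
    (hW : Surjective (algebraMap R (Module.End R (LinearMap.lsmul R V x).range)))
    (hker : ∀ w : V, x • w = 0 → y ^ n • w = 0)
    (hrange : ∀ v : V, y ^ n • v ∈ (LinearMap.lsmul R V x).range) :
    y ^ n ∈ Ideal.span {x} ⊔ Module.annihilator R V := by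
  obtain ⟨φ, hφ⟩ := exists_linearMap_comp_rangeRestrict_eq (f := LinearMap.lsmul R V x)
    (g := (LinearMap.lsmul R V (y ^ n)).codRestrict _ hrange) fun w hw =>
      Subtype.ext (hker w hw)
  obtain ⟨a, rfl⟩ := hW φ
  have hann : y ^ n - x * a ∈ Module.annihilator R V := Module.mem_annihilator.2 fun v => by
    have := congrArg Subtype.val (LinearMap.congr_fun hφ v)
    rw [sub_smul, sub_eq_zero, mul_comm, mul_smul]
    exact this.symm
  rw [← add_sub_cancel (x * a) (y ^ n)]
  exact add_mem (Ideal.mem_sup_left (Ideal.mem_span_singleton'.2 ⟨a, mul_comm a x⟩))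
    (Ideal.mem_sup_right hann)

end Multiplication

section LocalRing

variable {R V : Type*} [CommRing R] [AddCommGroup V] [Module R V] {x y : R}

lemma left_mem_of_eq_span_pair {I : Ideal R} (h : I = Ideal.span {x, y}) : x ∈ I :=
  h ▸ Ideal.subset_span (by simp)

variable [IsLocalRing R]

lemma length_quotient_le_iff_pow_mem (hxy : maximalIdeal R = Ideal.span {x, y}) {I : Ideal R}
    (hx : x ∈ I) {n : ℕ} : Module.length R (R ⧸ I) ≤ n ↔ y ^ n ∈ I := by
  have hspan : span R {Ideal.Quotient.mk I 1} = ⊤ := by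
    rw [span_singleton_eq_top_iff]
    exact fun v => (Ideal.Quotient.mk_surjective v).imp fun r hr => by
      rw [← hr, ← Ideal.Quotient.mkₐ_eq_mk R, ← map_smul, smul_eq_mul, mul_one]
  have hsmul (r : R) : r • Ideal.Quotient.mk I 1 = 0 ↔ r ∈ I := by
    rw [← Ideal.Quotient.mkₐ_eq_mk R, ← map_smul, smul_eq_mul, mul_one, Ideal.Quotient.mkₐ_eq_mk,
      Ideal.Quotient.eq_zero_iff_mem]
  rw [← hsmul, ← length_span_singleton_le_iff_pow_smul_eq_zero hxy ((hsmul x).2 hx), hspan,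
    Module.length_top]

lemma exists_pow_smul_eq_zero [IsArtinianRing R] {r : R} (hr : r ∈ maximalIdeal R) :
    ∃ N, ∀ v : V, r ^ N • v = 0 := by
  obtain ⟨N, hN⟩ := IsArtinianRing.isNilpotent_jacobson_bot (R := R)
  have hrN : r ^ N = 0 := by
    simpa [hN] using Ideal.pow_mem_pow (maximalIdeal_le_jacobson ⊥ hr) N
  exact ⟨N, fun v => by rw [hrN, zero_smul]⟩

lemma isCocyclic_of_pow_smul_ne_zero [IsArtinianRing R]
    (hxy : maximalIdeal R = Ideal.span {x, y}) {n : ℕ}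
    (hlen : Module.length R (LinearMap.lsmul R V x).ker ≤ n + 1) {w : V} (hxw : x • w = 0)
    (hw : y ^ n • w ≠ 0) : IsCocyclic R V := by
  let K := (LinearMap.lsmul R V x).ker
  have hK : span R {(⟨w, hxw⟩ : K)} = ⊤ := by
    refine span_singleton_eq_top_of_pow_smul_ne_zero (n := n) hxy hlen ?_ ?_
    · simpa [Subtype.ext_iff] using hxw
    · simpa [Subtype.ext_iff] using hw
  have hyw : y ^ (n + 1) • w = 0 := by
    rw [← length_span_singleton_le_iff_pow_smul_eq_zero hxy hxw]
    have hle : span R {w} ≤ K := (span_singleton_le_iff_mem w K).2 hxw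
    exact_mod_cast (Module.length_le_of_injective _ (inclusion_injective hle)).trans hlen
  refine ⟨y ^ n • w, hw, fun v hv => ?_⟩
  obtain ⟨N, hN⟩ := exists_pow_smul_eq_zero (V := V) (left_mem_of_eq_span_pair hxy)
  obtain ⟨i, hi0, hi⟩ : ∃ i, x ^ i • v ≠ 0 ∧ x ^ (i + 1) • v = 0 :=
    Nat.exists_not_and_succ_of_not_zero_of_exists (by simpa using hv) ⟨N, hN v⟩
  have hiK : x ^ i • v ∈ K := by
    rw [pow_succ', mul_smul] at hi
    exact hi
  have hiw : x ^ i • v ∈ span R {w} := by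
    obtain ⟨r, hr⟩ := (span_singleton_eq_top_iff R _).1 hK ⟨_, hiK⟩
    exact mem_span_singleton.2 ⟨r, congrArg Subtype.val hr⟩
  exact span_singleton_smul_le R (x ^ i) v (pow_smul_mem_span_singleton hxy hxw hyw hiw hi0)

variable [Module.Finite R V]

lemma range_lsmul_ne_top [Nontrivial V] {r : R} (hr : r ∈ maximalIdeal R) :
    (LinearMap.lsmul R V r).range ≠ ⊤ := fun h => top_ne_bot (α := Submodule R V) <|
  eq_bot_of_le_smul_of_le_jacobson_bot (Ideal.span {r}) ⊤ Module.Finite.fg_top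
    (by rw [← range_lsmul_eq_smul_top, h])
    ((Ideal.span_singleton_le_iff_mem _).2 (maximalIdeal_le_jacobson ⊥ hr))

lemma span_singleton_eq_top_of_pow_smul_notMem_range
    (hxy : maximalIdeal R = Ideal.span {x, y}) {n : ℕ}
    (hlen : Module.length R (V ⧸ (LinearMap.lsmul R V x).range) ≤ n + 1) {e : V}
    (he : y ^ n • e ∉ (LinearMap.lsmul R V x).range) : span R {e} = ⊤ := by
  set W := (LinearMap.lsmul R V x).range with hW
  have hspan : span R {W.mkQ e} = ⊤ := by
    refine span_singleton_eq_top_of_pow_smul_ne_zero (n := n) hxy hlen ?_ ?_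
    · rw [← map_smul, mkQ_apply, Quotient.mk_eq_zero]
      exact ⟨e, rfl⟩
    · rwa [← map_smul, mkQ_apply, Ne, Quotient.mk_eq_zero]
  refine top_le_iff.1 (le_of_le_smul_of_le_jacobson_bot Module.Finite.fg_top (I := Ideal.span {x})
    ?_ ?_)
  · rw [Ideal.span_singleton_le_iff_mem]
    exact maximalIdeal_le_jacobson ⊥ (left_mem_of_eq_span_pair hxy)
  · rw [← range_lsmul_eq_smul_top, ← hW, sup_comm, ← comap_map_mkQ, map_span, Set.image_singleton,
      hspan, comap_top]

variable [IsArtinianRing R]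

lemma length_quotient_span_sup_annihilator_le (hxy : maximalIdeal R = Ideal.span {x, y}) :
    Module.length R (R ⧸ Ideal.span {x} ⊔ Module.annihilator R V) ≤
      Module.length R (V ⧸ (LinearMap.lsmul R V x).range) := by
  obtain ⟨n, hn⟩ := ENat.ne_top_iff_exists.1
    (Module.length_ne_top (R := R) (M := V ⧸ (LinearMap.lsmul R V x).range))
  rw [← hn,
    length_quotient_le_iff_pow_mem hxy (Ideal.mem_sup_left (Ideal.mem_span_singleton_self x))]
  have hle : Ideal.span {x} ≤ maximalIdeal R := hxy ▸ Ideal.span_mono (by simp)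
  have hy : y ∈ maximalIdeal R := hxy ▸ Ideal.subset_span (by simp)
  exact pow_mem_sup_annihilator hle (by rw [hn, range_lsmul_eq_smul_top]) hy

theorem length_quotient_annihilator_le (hxy : maximalIdeal R = Ideal.span {x, y}) :
    Module.length R (R ⧸ Module.annihilator R V) ≤ Module.length R V := by
  obtain ⟨N, hN⟩ := exists_pow_smul_eq_zero (V := V) (left_mem_of_eq_span_pair hxy)
  induction N generalizing V with
  | zero =>
    have := subsingleton_of_forall_eq (0 : V) (by simpa using hN)
    rw [Module.annihilator_eq_top_iff.2 this]
    simp [Module.length_eq_zero]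
  | succ N ih =>
    rw [length_quotient_annihilator_eq_add x,
      length_eq_length_add_length_quotient (LinearMap.lsmul R V x).range]
    refine add_le_add (ih ?_) (length_quotient_span_sup_annihilator_le hxy)
    rintro ⟨-, v, rfl⟩
    simpa [Subtype.ext_iff, ← mul_smul, ← pow_succ] using hN v

lemma length_range_lsmul_le (hxy : maximalIdeal R = Ideal.span {x, y})
    (hlen : Module.length R V ≤ Module.length R (R ⧸ Module.annihilator R V)) :
    Module.length R (LinearMap.lsmul R V x).range ≤
      Module.length R (R ⧸ Module.annihilator R (LinearMap.lsmul R V x).range) := by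
  rw [length_quotient_annihilator_eq_add x,
    length_eq_length_add_length_quotient (LinearMap.lsmul R V x).range] at hlen
  refine (ENat.add_le_add_iff_right Module.length_ne_top).1 (hlen.trans ?_)
  gcongr
  exact length_quotient_span_sup_annihilator_le hxy

lemma length_quotient_range_lsmul_le (hxy : maximalIdeal R = Ideal.span {x, y})
    (hlen : Module.length R V ≤ Module.length R (R ⧸ Module.annihilator R V)) :
    Module.length R (V ⧸ (LinearMap.lsmul R V x).range) ≤
      Module.length R (R ⧸ Ideal.span {x} ⊔ Module.annihilator R V) := by
  rw [length_quotient_annihilator_eq_add x,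
    length_eq_length_add_length_quotient (LinearMap.lsmul R V x).range] at hlen
  refine (ENat.add_le_add_iff_left Module.length_ne_top).1 (hlen.trans ?_)
  gcongr
  exact length_quotient_annihilator_le hxy

theorem surjective_algebraMap_end_of_range_lsmul (hxy : maximalIdeal R = Ideal.span {x, y})
    (hlen : Module.length R V ≤ Module.length R (R ⧸ Module.annihilator R V))
    (hW : Surjective (algebraMap R (Module.End R (LinearMap.lsmul R V x).range))) :
    Surjective (algebraMap R (Module.End R V)) := by
  rcases subsingleton_or_nontrivial V with _ | _
  · exact fun f => ⟨0, Subsingleton.elim _ _⟩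
  set W := (LinearMap.lsmul R V x).range
  obtain ⟨n, hn⟩ : ∃ n : ℕ, Module.length R (V ⧸ W) = n + 1 := by
    have hpos : 0 < Module.length R (V ⧸ W) := Module.length_pos_iff.2
      (Quotient.nontrivial_iff.2 (range_lsmul_ne_top (left_mem_of_eq_span_pair hxy)))
    obtain ⟨m, hm⟩ := ENat.ne_top_iff_exists.1 (Module.length_ne_top (R := R) (M := V ⧸ W))
    rw [← hm] at hpos ⊢
    exact ⟨m - 1, by exact_mod_cast (Nat.succ_pred_eq_of_pos (by exact_mod_cast hpos)).symm⟩
  by_cases hker : ∃ w : V, x • w = 0 ∧ y ^ n • w ≠ 0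
  · obtain ⟨w, hxw, hw⟩ := hker
    have hcocyclic : IsCocyclic R V := isCocyclic_of_pow_smul_ne_zero hxy
      ((length_ker_eq_length_quotient_range _).trans hn).le hxw hw
    exact surjective_algebraMap_end_of_isCocyclic hcocyclic
      (isFiniteLength_iff_isNoetherian_isArtinian.2 ⟨inferInstance, inferInstance⟩) hlen
  by_cases hrange : ∃ e : V, y ^ n • e ∉ W
  · obtain ⟨e, he⟩ := hrange
    exact surjective_algebraMap_end_of_span_singleton_eq_top
      (span_singleton_eq_top_of_pow_smul_notMem_range hxy hn.le he)
  push Not at hker hrange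
  have hle : Module.length R (V ⧸ W) ≤ n :=
    (length_quotient_range_lsmul_le hxy hlen).trans
      ((length_quotient_le_iff_pow_mem hxy (Ideal.mem_sup_left (Ideal.mem_span_singleton_self x))).2
        (pow_mem_span_sup_annihilator hW hker hrange))
  rw [hn] at hle
  exact absurd (by exact_mod_cast hle) n.not_succ_le_self

theorem surjective_algebraMap_end_of_length_le (hxy : maximalIdeal R = Ideal.span {x, y})
    (hlen : Module.length R V ≤ Module.length R (R ⧸ Module.annihilator R V)) :
    Surjective (algebraMap R (Module.End R V)) := by
  obtain ⟨N, hN⟩ := exists_pow_smul_eq_zero (V := V) (left_mem_of_eq_span_pair hxy)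
  induction N generalizing V with
  | zero =>
    have := subsingleton_of_forall_eq (0 : V) (by simpa using hN)
    exact fun f => ⟨0, Subsingleton.elim _ _⟩
  | succ N ih =>
    refine surjective_algebraMap_end_of_range_lsmul hxy hlen
      (ih (length_range_lsmul_le hxy hlen) ?_)
    rintro ⟨-, v, rfl⟩
    simpa [Subtype.ext_iff, ← mul_smul, ← pow_succ] using hN v

end LocalRing

section TwoGenerators

open Polynomial in
lemma isPrincipalIdealRing_of_adjoin_pair_eq_top {K T : Type*} [Field K] [CommRing T] [Algebra K T]
    {x y : T} (hxy : Algebra.adjoin K {x, y} = ⊤) {f : K[X]} (hf : Irreducible f)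
    (hfx : aeval x f = 0) : IsPrincipalIdealRing T := by
  have : Fact (Irreducible f) := ⟨hf⟩
  let g : (AdjoinRoot f)[X] →ₐ[K] T :=
    aevalTower (AdjoinRoot.liftAlgHom f (Algebra.ofId K T) x hfx) y
  have hx : g (C (AdjoinRoot.root f)) = x :=
    (aevalTower_C _ _ _).trans (AdjoinRoot.liftAlgHom_root _ _ _ hfx)
  have hy : g X = y := by simp [g]
  have hrange : g.range = ⊤ := by
    rw [eq_top_iff, ← hxy, Algebra.adjoin_le_iff]
    rintro _ (rfl | rfl)
    exacts [⟨_, hx⟩, ⟨_, hy⟩]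
  exact IsPrincipalIdealRing.of_surjective g (AlgHom.range_eq_top g |>.1 hrange)

theorem exists_eq_span_pair_of_adjoin_pair_eq_top {K R : Type*} [Field K] [CommRing R]
    [Algebra K R] [Algebra.IsIntegral K R] {x y : R} (hxy : Algebra.adjoin K {x, y} = ⊤)
    (m : Ideal R) [m.IsMaximal] : ∃ p q, m = Ideal.span {p, q} := by
  -- `R / (f(x))` is a quotient of the principal ideal ring `(K[X] / (f))[Y]`.
  let f := minpoly K (Ideal.Quotient.mk m x)
  let p := Polynomial.aeval x f
  have hp : p ∈ m := by
    rw [← Ideal.Quotient.eq_zero_iff_mem, ← Ideal.Quotient.mkₐ_eq_mk K,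
      ← Polynomial.aeval_algHom_apply]
    exact minpoly.aeval K _
  let π := Ideal.Quotient.mkₐ K (Ideal.span {p})
  have hπ : Surjective π := Ideal.Quotient.mkₐ_surjective K _
  have : IsPrincipalIdealRing (R ⧸ Ideal.span {p}) := by
    refine isPrincipalIdealRing_of_adjoin_pair_eq_top (x := π x) (y := π y) (f := f) ?_
      (minpoly.irreducible (Algebra.IsIntegral.isIntegral _)) ?_
    · rw [← Set.image_pair, ← AlgHom.map_adjoin, hxy, Algebra.map_top, AlgHom.range_eq_top]
      exact hπ
    · rw [Polynomial.aeval_algHom_apply]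
      exact Ideal.Quotient.eq_zero_iff_mem.2 (Ideal.mem_span_singleton_self p)
  obtain ⟨q', hq'⟩ := (IsPrincipalIdealRing.principal (m.map π)).principal
  obtain ⟨q, rfl⟩ := hπ q'
  refine ⟨p, q, ?_⟩
  have hker : RingHom.ker π = Ideal.span {p} := Ideal.mk_ker
  have hle : RingHom.ker π ≤ m := hker.trans_le ((Ideal.span_singleton_le_iff_mem m).2 hp)
  calc m = m ⊔ RingHom.ker π := (sup_eq_left.2 hle).symm
    _ = (m.map π).comap π := (Ideal.comap_map_of_surjective' π hπ m).symm
    _ = ((Ideal.span {q}).map π).comap π := by rw [hq', Ideal.map_span, Set.image_singleton]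
    _ = Ideal.span {q} ⊔ Ideal.span {p} := by rw [Ideal.comap_map_of_surjective' π hπ, hker]
    _ = Ideal.span {p, q} := by rw [sup_comm, ← Ideal.span_insert]

end TwoGenerators

section Finrank

variable {K R M N : Type*} [Field K] [CommRing R] [IsLocalRing R] [Algebra K R]
  [FiniteDimensional K R] [AddCommGroup M] [Module R M] [Module K M] [IsScalarTower K R M]
  [FiniteDimensional K M] [AddCommGroup N] [Module R N] [Module K N] [IsScalarTower K R N]
  [FiniteDimensional K N]

variable (R) in
lemma finrank_le_finrank_iff_length_le_length :
    Module.finrank K M ≤ Module.finrank K N ↔ Module.length R M ≤ Module.length R N := by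
  have h0 : Module.length (ResidueField K) (ResidueField R) ≠ 0 := Module.length_pos.ne'
  rw [← ENat.mul_le_mul_right_iff h0 Module.length_ne_top, ← length_restrictScalars,
    ← length_restrictScalars, Module.length_eq_finrank, Module.length_eq_finrank, Nat.cast_le]

end Finrank

section Decomposition

lemma isLocalRing_quotient_pow {S : Type*} [CommRing S] (m : Ideal S) [m.IsMaximal] {k : ℕ}
    (hk : k ≠ 0) : IsLocalRing (S ⧸ m ^ k) := by
  have hle : m ^ k ≤ m := Ideal.pow_le_self hk
  have : Nontrivial (S ⧸ m ^ k) :=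
    Ideal.Quotient.nontrivial_iff.2 fun h => Ideal.IsPrime.ne_top' (top_le_iff.1 (h ▸ hle))
  refine .of_unique_max_ideal ⟨m.map (Ideal.Quotient.mk _), ?_, fun J hJ => ?_⟩
  · exact Ideal.IsMaximal.map_of_surjective_of_ker_le Ideal.Quotient.mk_surjective
      (by rwa [Ideal.mk_ker])
  · have hmJ : m = J.comap (Ideal.Quotient.mk (m ^ k)) := by
      have hJ' : (J.comap (Ideal.Quotient.mk (m ^ k))).IsPrime := inferInstance
      refine Ideal.IsMaximal.eq_of_le inferInstance hJ'.ne_top (hJ'.le_of_pow_le (n := k) ?_)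
      conv_lhs => rw [← Ideal.mk_ker (I := m ^ k)]
      exact Ideal.comap_mono bot_le
    rw [← Ideal.map_comap_of_surjective _ Ideal.Quotient.mk_surjective J, ← hmJ]

variable {ι S V : Type*} [CommRing S] [AddCommGroup V] [Module S V] {I : ι → Ideal S}

lemma isInternal_torsionBySet [Finite ι] [DecidableEq ι] (hI : Pairwise (IsCoprime on I))
    (hbot : ⨅ i, I i = ⊥) : DirectSum.IsInternal fun i => torsionBySet S V (I i) := by
  have := Fintype.ofFinite ι
  have hpair : ((Finset.univ : Finset ι) : Set ι).Pairwise fun i j => I i ⊔ I j = ⊤ :=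
    fun i _ j _ hij => Ideal.isCoprime_iff_sup_eq.1 (hI hij)
  refine DirectSum.isInternal_submodule_of_iSupIndep_of_iSup_eq_top
    (iSupIndep_iff_supIndep_univ.2 (supIndep_torsionBySet_ideal hpair)) ?_
  have htorsion : Module.IsTorsionBySet S V (⨅ i ∈ Finset.univ, I i : Ideal S) := by
    simp [hbot, Module.IsTorsionBySet]
  simpa only [Finset.mem_univ, iSup_pos] using
    (iSup_torsionBySet_ideal_eq_torsionBySet_iInf hpair).trans
      ((Module.isTorsionBySet_iff_torsionBySet_eq_top _).1 htorsion)

lemma end_ext_of_torsionBySet [Finite ι] (hI : Pairwise (IsCoprime on I))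
    (hbot : ⨅ i, I i = ⊥) {f g : Module.End S V}
    (h : ∀ i, ∀ v : torsionBySet S V (I i), f v = g v) : f = g := by
  classical
  rw [← LinearMap.eqLocus_eq_top, eq_top_iff,
    ← (isInternal_torsionBySet hI hbot).submodule_iSup_eq_top, iSup_le_iff]
  exact fun i v hv => h i ⟨v, hv⟩

lemma surjective_algebraMap_end_of_torsionBySet [Finite ι] (hI : Pairwise (IsCoprime on I))
    (hbot : ⨅ i, I i = ⊥)
    (h : ∀ i, Surjective (algebraMap (S ⧸ I i) (Module.End (S ⧸ I i) (torsionBySet S V (I i))))) :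
    Surjective (algebraMap S (Module.End S V)) := by
  intro f
  have hf (i) (v) (hv : v ∈ torsionBySet S V (I i)) : f v ∈ torsionBySet S V (I i) := by
    rw [mem_torsionBySet_iff] at hv ⊢
    exact fun a => by rw [← map_smul, hv, map_zero]
  let g (i) : Module.End (S ⧸ I i) (torsionBySet S V (I i)) :=
    (f.restrict (hf i)).extendScalarsOfSurjective Ideal.Quotient.mk_surjective
  choose r hr using fun i => h i (g i)
  obtain ⟨s, hs⟩ := Ideal.pi_quotient_surjective hI r
  refine ⟨s, end_ext_of_torsionBySet hI hbot fun i v => ?_⟩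
  have hv := LinearMap.congr_fun (hr i) v
  rw [← hs i] at hv
  exact congrArg Subtype.val hv

variable {K : Type*} [Field K] [Algebra K S]

lemma finiteDimensional_torsionBySet [Module K V] [IsScalarTower K S V] [FiniteDimensional K V]
    (J : Ideal S) : FiniteDimensional K (torsionBySet S V J) :=
  .of_injective ((torsionBySet S V J).subtype.restrictScalars K) (subtype_injective _)

lemma finrank_le_sum_finrank_quotient_annihilator [Fintype ι] [FiniteDimensional K S]
    [FaithfulSMul S V] (hI : Pairwise (IsCoprime on I))
    (hbot : ⨅ i, I i = ⊥) : Module.finrank K S ≤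
      ∑ i, Module.finrank K
        ((S ⧸ I i) ⧸ Module.annihilator (S ⧸ I i) (torsionBySet S V (I i))) := by
  let φ : S →ₗ[K] ∀ i, (S ⧸ I i) ⧸ Module.annihilator (S ⧸ I i) (torsionBySet S V (I i)) :=
    LinearMap.pi fun i =>
      (Ideal.Quotient.mkₐ K _).toLinearMap ∘ₗ (Ideal.Quotient.mkₐ K (I i)).toLinearMap
  have hφ : Injective φ := by
    rw [injective_iff_map_eq_zero]
    intro s hs
    have hzero : algebraMap S (Module.End S V) s = 0 := end_ext_of_torsionBySet hI hbot fun i v =>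
      congrArg Subtype.val
        (Module.mem_annihilator.1 (Ideal.Quotient.eq_zero_iff_mem.1 (congrFun hs i)) v)
    rw [← mem_bot S, ← Module.annihilator_eq_bot.2 ‹FaithfulSMul S V›]
    exact Module.mem_annihilator.2 (LinearMap.congr_fun hzero)
  exact (LinearMap.finrank_le_finrank_of_injective hφ).trans_eq (Module.finrank_pi_fintype K)

lemma finrank_eq_sum_finrank_torsionBySet [Fintype ι] [Module K V] [IsScalarTower K S V]
    [FiniteDimensional K V] (hI : Pairwise (IsCoprime on I))
    (hbot : ⨅ i, I i = ⊥) :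
    Module.finrank K V = ∑ i, Module.finrank K (torsionBySet S V (I i)) := by
  classical
  have (i : ι) : FiniteDimensional K (torsionBySet S V (I i)) := finiteDimensional_torsionBySet _
  let e := LinearEquiv.ofBijective
    (DirectSum.coeLinearMap fun i => torsionBySet S V (I i))
    (isInternal_torsionBySet (V := V) hI hbot)
  rw [← (e.restrictScalars K).finrank_eq, Module.finrank_directSum]

end Decomposition

section Pair

lemma adjoin_pair_quotient_eq_top {K S : Type*} [CommSemiring K] [CommRing S] [Algebra K S]
    {x y : S} (hxy : Algebra.adjoin K {x, y} = ⊤) (I : Ideal S) :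
    Algebra.adjoin K {Ideal.Quotient.mk I x, Ideal.Quotient.mk I y} = ⊤ := by
  have h := (Ideal.Quotient.mkₐ K I).map_adjoin {x, y}
  rw [hxy, Algebra.map_top, (AlgHom.range_eq_top _).2 (Ideal.Quotient.mkₐ_surjective K I),
    Set.image_pair] at h
  exact h.symm

variable {K S V : Type*} [Field K] [CommRing S] [Algebra K S] [FiniteDimensional K S]
  [AddCommGroup V] [Module K V] [Module S V] [IsScalarTower K S V] [FiniteDimensional K V]
  {x y : S}

lemma finrank_quotient_annihilator_le [IsLocalRing S] (hxy : Algebra.adjoin K {x, y} = ⊤) :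
    Module.finrank K (S ⧸ Module.annihilator S V) ≤ Module.finrank K V := by
  have : IsArtinianRing S := .of_finite K S
  have : Module.Finite S V := .of_restrictScalars_finite K S V
  obtain ⟨p, q, hpq⟩ := exists_eq_span_pair_of_adjoin_pair_eq_top hxy (maximalIdeal S)
  rw [finrank_le_finrank_iff_length_le_length S]
  exact length_quotient_annihilator_le hpq

lemma surjective_algebraMap_end_of_finrank_le [IsLocalRing S] (hxy : Algebra.adjoin K {x, y} = ⊤)
    (h : Module.finrank K V ≤ Module.finrank K (S ⧸ Module.annihilator S V)) :
    Surjective (algebraMap S (Module.End S V)) := by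
  have : IsArtinianRing S := .of_finite K S
  have : Module.Finite S V := .of_restrictScalars_finite K S V
  obtain ⟨p, q, hpq⟩ := exists_eq_span_pair_of_adjoin_pair_eq_top hxy (maximalIdeal S)
  rw [finrank_le_finrank_iff_length_le_length S] at h
  exact surjective_algebraMap_end_of_length_le hpq h

theorem surjective_algebraMap_end_of_finrank_eq [FaithfulSMul S V]
    (hxy : Algebra.adjoin K {x, y} = ⊤) (h : Module.finrank K S = Module.finrank K V) :
    Surjective (algebraMap S (Module.End S V)) := by
  have : IsArtinianRing S := .of_finite K S
  have := Fintype.ofFinite (MaximalSpectrum S)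
  obtain ⟨k, hk⟩ := IsArtinianRing.isNilpotent_nilradical (R := S)
  let I (m : MaximalSpectrum S) : Ideal S := m.asIdeal ^ (k + 1)
  have hbot : ⨅ m, I m = ⊥ := by
    rw [← IsArtinianRing.nilradical_pow_eq_iInf, pow_succ, hk, zero_mul, Ideal.zero_eq_bot]
  have hI : Pairwise (IsCoprime on I) := fun m n hmn =>
    .pow (m.isCoprime_of_ne hmn)
  have hlocal (m) : IsLocalRing (S ⧸ I m) := isLocalRing_quotient_pow m.asIdeal k.succ_ne_zero
  have hfin (m : MaximalSpectrum S) : FiniteDimensional K (torsionBySet S V (I m)) :=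
    finiteDimensional_torsionBySet _
  have hle (m) :
      Module.finrank K ((S ⧸ I m) ⧸ Module.annihilator (S ⧸ I m) (torsionBySet S V (I m))) ≤
        Module.finrank K (torsionBySet S V (I m)) :=
    finrank_quotient_annihilator_le (adjoin_pair_quotient_eq_top hxy (I m))
  have hsum := finrank_le_sum_finrank_quotient_annihilator (K := K) (V := V) hI hbot
  rw [h, finrank_eq_sum_finrank_torsionBySet hI hbot] at hsum
  have heq := (Finset.sum_eq_sum_iff_of_le fun m _ => hle m).1
    ((Finset.sum_le_sum fun m _ => hle m).antisymm hsum)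
  exact surjective_algebraMap_end_of_torsionBySet hI hbot fun m =>
    surjective_algebraMap_end_of_finrank_le (adjoin_pair_quotient_eq_top hxy (I m))
      (heq m (Finset.mem_univ m)).ge

end Pair

open scoped IsMulCommutative in
theorem centralizer_of_max_dim_commuting_pair_general {F R V : Type*} [Field F] [Ring R]
    [Algebra F R] [AddCommGroup V] [Module F V] [Module R V] [IsScalarTower F R V]
    [FaithfulSMul R V] [FiniteDimensional F V] {a b x : R} (hab : a * b = b * a)
    (hdim : Module.finrank F (Algebra.adjoin F {a, b}) = Module.finrank F V)
    (hxa : x * a = a * x) (hxb : x * b = b * x) : x ∈ Algebra.adjoin F {a, b} := by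
  let S := Algebra.adjoin F {a, b}
  have hcomm : ∀ s ∈ ({a, b} : Set R), ∀ t ∈ ({a, b} : Set R), s * t = t * s := by
    rintro _ (rfl | rfl) _ (rfl | rfl)
    exacts [rfl, hab, hab.symm, rfl]
  have : IsMulCommutative S := Algebra.isMulCommutative_adjoin F hcomm
  have : FiniteDimensional F S :=
    .of_injective (Algebra.lsmul F F V : S →ₐ[F] Module.End F V).toLinearMap fun s t hst =>
      FaithfulSMul.eq_of_smul_eq_smul fun v => LinearMap.congr_fun hst v
  have hgen : Algebra.adjoin F {(⟨a, Algebra.subset_adjoin (by simp)⟩ : S),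
      ⟨b, Algebra.subset_adjoin (by simp)⟩} = ⊤ := by
    rw [← Algebra.adjoin_adjoin_coe_preimage (R := F) (s := {a, b})]
    congr 1
    ext z
    simp [S, Subtype.ext_iff]
  have hcommute (s : S) : Commute x s :=
    Algebra.commute_of_mem_adjoin_of_forall_mem_commute s.2 (by simp [commute_iff_eq, hxa, hxb])
  let f : Module.End S V :=
    { toFun := fun v => x • v
      map_add' := smul_add x
      map_smul' := fun s v => by
        simp only [Subalgebra.smul_def, smul_smul, (hcommute s).eq, RingHom.id_apply] }
  obtain ⟨s, hs⟩ := surjective_algebraMap_end_of_finrank_eq hgen hdim f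
  have hsx : (s : R) = x := FaithfulSMul.eq_of_smul_eq_smul (LinearMap.congr_fun hs)
  exact hsx ▸ s.2

/-- Laffey–Lazarus / Neubauer–Saltman: if commuting `k × k` matrices `A, B` generate a
subalgebra of maximal dimension `k`, then every matrix commuting with both `A` and `B`
is a polynomial in `A` and `B`, i.e. lies in `Algebra.adjoin F {A, B}`. -/
theorem centralizer_of_max_dim_commuting_pair (F : Type*) [Field F] (k : ℕ)
    (A B : Matrix (Fin k) (Fin k) F) (hAB : A * B = B * A)
    (hdim : Module.finrank F ↥(Algebra.adjoin F {A, B}) = k)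
    (X : Matrix (Fin k) (Fin k) F) (hXA : X * A = A * X) (hXB : X * B = B * X) :
    X ∈ Algebra.adjoin F {A, B} := by
  have : FaithfulSMul (Matrix (Fin k) (Fin k) F) (Fin k → F) := ⟨Matrix.ext_iff_smul.2⟩
  exact centralizer_of_max_dim_commuting_pair_general (V := Fin k → F) hAB
    (hdim.trans (Module.finrank_fin_fun F).symm) hXA hXB
end

section
/- Let F be an algebraically closed field of characteristic zero and let n ≥ 29. In the polynomial ring R = MvPolynomial ((Fin n × Fin n) ⊕ (Fin n × Fin n) ⊕ (Fin n × Fin n)) F, let X, Y, Z be the generic n×n matrices whose entries are the variables of the three summands, and let I be the ideal of R generated by the 3n² entries of the matrices X*Y − Y*X, X*Z − Z*X, and Y*Z − Z*Y. Then the radical of I is NOT a prime ideal (equivalently, the zero locus of I in the prime spectrum of R is not irreducible). -/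
/-!
If the radical were prime, the coordinate ring of the variety of commuting triples would be a
domain. On it `X` has the all-ones vector `v` as a cyclic vector, as one sees by specialising to
diagonal matrices (Vandermonde), and a matrix commuting with `X` is then determined by its value
at `v`. So the variety would have dimension at most `n ^ 2 + 2 * n`, and every proper closed
subvariety would be strictly smaller.

The triples `c t + u * N t * u⁻¹`, where the `N t` are strictly block lower triangular with block
sizes `a, 2 * a, c`, commute as soon as the subdiagonal blocks satisfy `C i * A j = C j * A i`.
They satisfy `(X - c 0) ^ 3 = 0`, so `X` has no cyclic vector; yet for `n ≥ 29` this family has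
`3 + 8 * a ^ 2 + 9 * a * c ≥ n ^ 2 + 2 * n` independent parameters for suitable `a` and `c`, all
algebraic over the field generated by the matrix entries: a contradiction.
-/

open Matrix MvPolynomial

section EntrywiseMembership

variable {l m n : Type*}

lemma mul_mem_matrix {R σ : Type*} [NonUnitalNonAssocSemiring R] [SetLike σ R]
    [NonUnitalSubsemiringClass σ R] [Fintype m] {S : σ} {M : Matrix l m R} {N : Matrix m n R}
    (hM : M ∈ (S : Set R).matrix) (hN : N ∈ (S : Set R).matrix) : M * N ∈ (S : Set R).matrix :=
  fun i j => sum_mem fun k _ => mul_mem (hM i k) (hN k j)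

lemma mulVec_apply_mem {R σ : Type*} [NonUnitalNonAssocSemiring R] [SetLike σ R]
    [NonUnitalSubsemiringClass σ R] [Fintype m] {S : σ} {M : Matrix l m R} {v : m → R}
    (hM : M ∈ (S : Set R).matrix) (hv : ∀ i, v i ∈ S) (i : l) : (M *ᵥ v) i ∈ S :=
  sum_mem fun k _ => mul_mem (hM i k) (hv k)

variable {F R : Type*} [CommRing F] [CommRing R] [Algebra F R]

lemma exists_map_val_eq {S : Subalgebra F R} {M : Matrix m m R} (hM : M ∈ (S : Set R).matrix) :
    ∃ N : Matrix m m S, N.map S.val = M :=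
  ⟨of fun i j => ⟨M i j, hM i j⟩, rfl⟩

variable [Fintype m] [DecidableEq m]

lemma det_mem_of_mem_matrix {S : Subalgebra F R} {M : Matrix m m R}
    (hM : M ∈ (S : Set R).matrix) : M.det ∈ S := by
  obtain ⟨N, rfl⟩ := exists_map_val_eq hM
  rw [← AlgHom.mapMatrix_apply, ← S.val.map_det]
  exact N.det.2

lemma adjugate_mem_matrix {S : Subalgebra F R} {M : Matrix m m R}
    (hM : M ∈ (S : Set R).matrix) : M.adjugate ∈ (S : Set R).matrix := by
  obtain ⟨N, rfl⟩ := exists_map_val_eq hM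
  rw [← AlgHom.mapMatrix_apply, ← S.val.map_adjugate N]
  exact fun i j => (N.adjugate i j).2

end EntrywiseMembership

section Krylov

variable {n : ℕ} {R : Type*} [CommRing R]

/-- The Krylov matrix of `X` at `v`, with columns `v, X v, …, X ^ (n - 1) v`. Its determinant is
nonzero exactly where `v` is a cyclic vector of `X`. -/
def krylovMatrix (X : Matrix (Fin n) (Fin n) R) (v : Fin n → R) : Matrix (Fin n) (Fin n) R :=
  of fun i k => (X ^ (k : ℕ) *ᵥ v) i

lemma map_det_krylovMatrix {S G : Type*} [CommRing S] [FunLike G R S] [RingHomClass G R S] (f : G)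
    (X : Matrix (Fin n) (Fin n) R) (v : Fin n → R) :
    f (krylovMatrix X v).det = (krylovMatrix (X.map f) (f ∘ v)).det := by
  refine (RingHom.map_det (f : R →+* S) _).trans (congrArg det ?_)
  ext i k
  change (f : R →+* S) ((X ^ (k : ℕ) *ᵥ v) i) = _
  rw [RingHom.map_mulVec, Matrix.map_pow]
  rfl

lemma mul_krylovMatrix {X Y : Matrix (Fin n) (Fin n) R} (h : Commute X Y) (v : Fin n → R) :
    Y * krylovMatrix X v = krylovMatrix X (Y *ᵥ v) := by
  ext i k
  change (Y *ᵥ (X ^ (k : ℕ) *ᵥ v)) i = (X ^ (k : ℕ) *ᵥ (Y *ᵥ v)) i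
  rw [mulVec_mulVec, mulVec_mulVec, (h.pow_left k).eq]

lemma krylovMatrix_diagonal_one (d : Fin n → R) : krylovMatrix (diagonal d) 1 = vandermonde d := by
  ext i k
  simp [krylovMatrix, diagonal_pow, mulVec_diagonal, vandermonde_apply]

lemma det_krylovMatrix_eq_zero_of_aeval_eq_zero [IsDomain R] {X : Matrix (Fin n) (Fin n) R}
    {p : Polynomial R} (hp : p ≠ 0) (hdeg : p.natDegree < n) (hX : Polynomial.aeval X p = 0)
    (v : Fin n → R) : (krylovMatrix X v).det = 0 := by
  refine exists_mulVec_eq_zero_iff.mp ⟨fun k => p.coeff k, fun h => hp ?_, ?_⟩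
  · exact Polynomial.leadingCoeff_eq_zero.mp (congrFun h ⟨p.natDegree, hdeg⟩)
  · calc krylovMatrix X v *ᵥ (fun k => p.coeff k)
      _ = ∑ k : Fin n, p.coeff k • (X ^ (k : ℕ) *ᵥ v) := by
          ext i
          simp [krylovMatrix, mulVec_eq_sum]
      _ = Polynomial.aeval X p *ᵥ v := by
          rw [Polynomial.aeval_eq_sum_range' hdeg, ← Fin.sum_univ_eq_sum_range
            (fun k => p.coeff k • X ^ k), sum_mulVec]
          simp only [smul_mulVec]
      _ = 0 := by rw [hX, zero_mulVec]

variable {F : Type*} [CommRing F] [Algebra F R]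

lemma krylovMatrix_mem_matrix {S : Subalgebra F R} {X : Matrix (Fin n) (Fin n) R} {v : Fin n → R}
    (hX : X ∈ (S : Set R).matrix) (hv : ∀ i, v i ∈ S) : krylovMatrix X v ∈ (S : Set R).matrix :=
  have hpow (k : ℕ) : X ^ k ∈ (S : Set R).matrix := pow_mem (S := S.matrix) hX k
  fun i k => mulVec_apply_mem (hpow k) hv i

lemma isAlgebraic_apply_of_commute [IsDomain R] {S : Subalgebra F R}
    {X Y : Matrix (Fin n) (Fin n) R} (h : Commute X Y) {v : Fin n → R}
    (hdet : (krylovMatrix X v).det ≠ 0) (hX : X ∈ (S : Set R).matrix) (hv : ∀ i, v i ∈ S)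
    (hYv : ∀ i, (Y *ᵥ v) i ∈ S) (i j : Fin n) : IsAlgebraic S (Y i j) := by
  have hK := krylovMatrix_mem_matrix hX hv
  have cramer : (krylovMatrix X v).det • Y
      = krylovMatrix X (Y *ᵥ v) * (krylovMatrix X v).adjugate := by
    rw [← mul_krylovMatrix h, Matrix.mul_assoc, mul_adjugate, Matrix.mul_smul, Matrix.mul_one]
  have hmem : (krylovMatrix X v).det * Y i j ∈ S := by
    rw [← smul_eq_mul, ← Matrix.smul_apply, cramer]
    exact mul_mem_matrix (krylovMatrix_mem_matrix hX hYv) (adjugate_mem_matrix hK) i j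
  exact .of_mul (mem_nonZeroDivisors_of_ne_zero hdet)
    (isAlgebraic_algebraMap (⟨_, det_mem_of_mem_matrix hK⟩ : S))
    (isAlgebraic_algebraMap (⟨_, hmem⟩ : S))

end Krylov

section TranscendenceDegree

universe u v

lemma isAlgebraic_of_adjoin_eq_top {F D : Type*} [CommRing F] [CommRing D] [IsDomain D]
    [Algebra F D] {S : Subalgebra F D} {s : Set D} (hs : Algebra.adjoin F s = ⊤)
    (h : ∀ x ∈ s, IsAlgebraic S x) : Algebra.IsAlgebraic S D := by
  have hle : Algebra.adjoin F s ≤ (Subalgebra.algebraicClosure S D).restrictScalars F :=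
    Algebra.adjoin_le h
  exact ⟨fun x => hle (hs ▸ Algebra.mem_top)⟩

lemma lift_trdeg_lt_lift_trdeg_of_not_injective {F : Type*} {D : Type u} {L : Type v} [Field F]
    [CommRing D] [IsDomain D] [CommRing L] [IsDomain L] [Algebra F D] [Algebra F L]
    {ψ : D →ₐ[F] L} (hψ : ¬ Function.Injective ψ) (s : Set D)
    [Algebra.IsAlgebraic (Algebra.adjoin F (ψ '' s)) L] (hD : Algebra.trdeg F D < Cardinal.aleph0) :
    Cardinal.lift.{u} (Algebra.trdeg F L) < Cardinal.lift.{v} (Algebra.trdeg F D) := by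
  obtain ⟨t, hts, ht⟩ := exists_isTranscendenceBasis_subset (R := F) (ψ '' s)
  choose x hx using fun y : t => hts y.2
  have hψx : ψ ∘ x = ((↑) : t → L) := funext fun y => (hx y).2
  have hind : AlgebraicIndependent F (ψ ∘ x) := hψx ▸ ht.1
  rw [← ht.cardinalMk_eq_trdeg]
  by_contra! hle
  have hbasis := (hind.of_comp ψ).isTranscendenceBasis_of_lift_trdeg_le hD hle
  obtain ⟨f, hf0, hf⟩ : ∃ f ≠ 0, ψ f = 0 := by
    simpa [injective_iff_map_eq_zero, and_comm] using hψ
  obtain ⟨g, hg0, hfg⟩ := (hbasis.isAlgebraic.isAlgebraic f).exists_nonzero_dvd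
    (mem_nonZeroDivisors_of_ne_zero hf0)
  obtain ⟨p, hp : aeval x p = g⟩ := (Algebra.adjoin_range_eq_range_aeval F x).le g.2
  have hψg : ψ g = 0 := zero_dvd_iff.mp (hf ▸ map_dvd ψ hfg)
  have hp0 : p = 0 := (injective_iff_map_eq_zero _).mp hind p <| by
    rw [← hψg, ← hp]
    exact (comp_aeval_apply x ψ p).symm
  exact hg0 (Subtype.ext (by simpa [hp0] using hp.symm))

/-- The set of all entries of a tuple of matrices. -/
def matrixEntries {κ m n R : Type*} (T : κ → Matrix m n R) : Set R :=
  Set.range fun p : κ × m × n => T p.1 p.2.1 p.2.2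

lemma matrixEntries_reindex {κ m n R : Type*} (ε : m ≃ n) (T : κ → Matrix m m R) :
    matrixEntries (fun t => reindex ε ε (T t)) = matrixEntries T :=
  ((Equiv.refl κ).prodCongr (ε.symm.prodCongr ε.symm)).surjective.range_comp
    fun q => T q.1 q.2.1 q.2.2

lemma trdeg_le_of_commute {F D : Type*} [Field F] [CommRing D] [IsDomain D] [Algebra F D] {n k : ℕ}
    {T : Fin (k + 1) → Matrix (Fin n) (Fin n) D} (hcomm : ∀ t, Commute (T 0) (T t))
    (hgen : Algebra.adjoin F (matrixEntries T) = ⊤) {v : Fin n → F}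
    (hdet : (krylovMatrix (T 0) (algebraMap F D ∘ v)).det ≠ 0) :
    Algebra.trdeg F D ≤ (n * n + k * n : ℕ) := by
  let gens : (Fin n × Fin n) ⊕ (Fin k × Fin n) → D :=
    Sum.elim (fun p => T 0 p.1 p.2) fun p => (T p.1.succ *ᵥ (algebraMap F D ∘ v)) p.2
  have gens_mem (p) : gens p ∈ Algebra.adjoin F (Set.range gens) :=
    Algebra.subset_adjoin ⟨p, rfl⟩
  have hv (i) : (algebraMap F D ∘ v) i ∈ Algebra.adjoin F (Set.range gens) :=
    Subalgebra.algebraMap_mem _ _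
  have hX : T 0 ∈ (Algebra.adjoin F (Set.range gens) : Set D).matrix :=
    fun i j => gens_mem (.inl (i, j))
  have halg : Algebra.IsAlgebraic (Algebra.adjoin F (Set.range gens)) D := by
    refine isAlgebraic_of_adjoin_eq_top hgen ?_
    rintro _ ⟨⟨t, i, j⟩, rfl⟩
    refine isAlgebraic_apply_of_commute (hcomm t) hdet hX hv ?_ i j
    cases t using Fin.cases with
    | zero => exact mulVec_apply_mem hX hv
    | succ t => exact fun i => gens_mem (.inr (t, i))
  calc Algebra.trdeg F D
    _ ≤ Cardinal.mk (Set.range gens) := Algebra.IsAlgebraic.trdeg_le_cardinalMk F _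
    _ ≤ (n * n + k * n : ℕ) := by simpa using Cardinal.mk_range_le_lift (f := gens)

end TranscendenceDegree

section CommutatorIdeal

variable {κ m R : Type*} [Fintype m]

/-- The ideal generated by the entries of all pairwise commutators of a tuple of matrices. -/
def commutatorIdeal [CommRing R] (T : κ → Matrix m m R) : Ideal R :=
  Ideal.span {p | ∃ s t i j, p = (T s * T t - T t * T s) i j}

lemma commutatorIdeal_le_ker_iff [CommRing R] {S : Type*} [CommRing S] {T : κ → Matrix m m R}
    {f : R →+* S} :
    commutatorIdeal T ≤ RingHom.ker f ↔ ∀ s t, Commute ((T s).map f) ((T t).map f) := by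
  have key (s t i j) : f ((T s * T t - T t * T s) i j) = 0 ↔
      ((T s).map f * (T t).map f) i j = ((T t).map f * (T s).map f) i j := by
    rw [← Matrix.map_mul, ← Matrix.map_mul, map_apply, map_apply, Matrix.sub_apply, map_sub,
      sub_eq_zero]
  refine Ideal.span_le.trans ⟨fun h s t => ?_, ?_⟩
  · ext i j
    exact (key s t i j).mp (h ⟨s, t, i, j, rfl⟩)
  · rintro h _ ⟨s, t, i, j, rfl⟩
    exact (key s t i j).mpr (congrFun₂ (h s t).eq i j)

lemma commutatorIdeal_le_iff [CommRing R] [LinearOrder κ] {T : κ → Matrix m m R} {J : Ideal R} :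
    commutatorIdeal T ≤ J ↔ ∀ s t, s < t → ∀ i j, (T s * T t - T t * T s) i j ∈ J := by
  refine ⟨fun h s t _ i j => h (Ideal.subset_span ⟨s, t, i, j, rfl⟩), fun h => ?_⟩
  refine Ideal.span_le.mpr ?_
  rintro _ ⟨s, t, i, j, rfl⟩
  obtain hst | rfl | hts := lt_trichotomy s t
  · exact h s t hst i j
  · simp
  · rw [← neg_sub, Matrix.neg_apply]
    exact neg_mem (h t s hts i j)

variable {σ : Type*} (F : Type*) [Field F]

/-- The tuple of generic matrices whose entries are distinct variables, labelled through `e`. -/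
noncomputable def genericTuple (e : κ × m × m ≃ σ) (t : κ) : Matrix m m (MvPolynomial σ F) :=
  of fun i j => X (e (t, i, j))

/-- The coordinate ring of the variety of commuting tuples of matrices with its reduced
structure. -/
abbrev CommutingCoordinateRing (e : κ × m × m ≃ σ) : Type _ :=
  MvPolynomial σ F ⧸ (commutatorIdeal (genericTuple F e)).radical

/-- The universal commuting tuple: the coordinate functions on the variety of commuting tuples. -/
noncomputable def universalTuple (e : κ × m × m ≃ σ) (t : κ) :
    Matrix m m (CommutingCoordinateRing F e) :=
  (genericTuple F e t).map (Ideal.Quotient.mk _)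

variable (e : κ × m × m ≃ σ)

lemma commute_universalTuple (s t : κ) :
    Commute (universalTuple F e s) (universalTuple F e t) :=
  commutatorIdeal_le_ker_iff.mp (Ideal.le_radical.trans_eq (Ideal.mk_ker).symm) s t

lemma adjoin_matrixEntries_universalTuple :
    Algebra.adjoin F (matrixEntries (universalTuple F e)) = ⊤ := by
  have hentries : matrixEntries (universalTuple F e)
      = Ideal.Quotient.mkₐ F (commutatorIdeal (genericTuple F e)).radical '' Set.range X := by
    rw [← Set.range_comp, ← e.surjective.range_comp]
    rfl
  rw [hentries, Algebra.adjoin_image, adjoin_range_X, Algebra.map_top, AlgHom.range_eq_top]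
  exact Ideal.Quotient.mkₐ_surjective F _

lemma exists_algHom_universalTuple_map_eq {K : Type*} [CommRing K] [IsReduced K] [Algebra F K]
    {x : κ → Matrix m m K} (hx : ∀ s t, Commute (x s) (x t)) :
    ∃ ψ : CommutingCoordinateRing F e →ₐ[F] K, ∀ t, (universalTuple F e t).map ψ = x t := by
  let φ : MvPolynomial σ F →ₐ[F] K := aeval fun a =>
    x (e.symm a).1 (e.symm a).2.1 (e.symm a).2.2
  have hφ (t) : (genericTuple F e t).map φ = x t := by
    ext i j
    simp [genericTuple, φ]
  have hker : (commutatorIdeal (genericTuple F e)).radical ≤ RingHom.ker (φ : _ →+* K) := by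
    refine (Ideal.isRadical_bot.comap _).radical_le_iff.mpr (commutatorIdeal_le_ker_iff.mpr ?_)
    simpa [hφ] using hx
  exact ⟨Ideal.Quotient.liftₐ _ φ hker, hφ⟩

variable {F}

lemma det_krylovMatrix_universalTuple_ne_zero {n : ℕ} (e : κ × Fin n × Fin n ≃ σ) (t : κ) :
    (krylovMatrix (universalTuple F e t) 1).det ≠ 0 := by
  obtain ⟨ψ, hψ⟩ := exists_algHom_universalTuple_map_eq F e
    (x := fun _ => diagonal (X : Fin n → MvPolynomial (Fin n) F)) fun _ _ => .refl _
  have hvandermonde : ψ (krylovMatrix (universalTuple F e t) 1).det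
      = (vandermonde (X : Fin n → MvPolynomial (Fin n) F)).det := by
    rw [map_det_krylovMatrix, hψ, Pi.comp_one, map_one, ← krylovMatrix_diagonal_one]
    rfl
  refine ne_of_apply_ne ψ ?_
  rw [hvandermonde, map_zero, det_vandermonde_ne_zero_iff]
  exact X_injective

theorem not_isPrime_radical_commutatorIdeal {n k : ℕ} {L : Type*} [CommRing L]
    [IsDomain L] [Algebra F L] (e : Fin (k + 1) × Fin n × Fin n ≃ σ)
    {x : Fin (k + 1) → Matrix (Fin n) (Fin n) L} (hx : ∀ s t, Commute (x s) (x t))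
    {p : Polynomial L} (hp : p ≠ 0) (hdeg : p.natDegree < n) (hpx : Polynomial.aeval (x 0) p = 0)
    [Algebra.IsAlgebraic (Algebra.adjoin F (matrixEntries x)) L]
    (htrdeg : (n * n + k * n : ℕ) ≤ Algebra.trdeg F L) :
    ¬ (commutatorIdeal (genericTuple F e)).radical.IsPrime := by
  intro hprime
  obtain ⟨ψ, hψ⟩ := exists_algHom_universalTuple_map_eq F e hx
  have hdet := det_krylovMatrix_universalTuple_ne_zero (F := F) e 0
  have hψdet : ψ (krylovMatrix (universalTuple F e 0) 1).det = 0 := by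
    rw [map_det_krylovMatrix, hψ, det_krylovMatrix_eq_zero_of_aeval_eq_zero hp hdeg hpx]
  have hψ_not_inj : ¬ Function.Injective ψ := fun h => hdet ((map_eq_zero_iff ψ h).mp hψdet)
  have hentries : ψ '' matrixEntries (universalTuple F e) = matrixEntries x := by
    simp only [matrixEntries, ← Set.range_comp, ← hψ]
    rfl
  have htrdeg_le : Algebra.trdeg F (CommutingCoordinateRing F e) ≤ (n * n + k * n : ℕ) :=
    trdeg_le_of_commute (commute_universalTuple F e 0) (adjoin_matrixEntries_universalTuple F e)
      (v := 1) (by rwa [Pi.comp_one, map_one])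
  have : Algebra.IsAlgebraic
      (Algebra.adjoin F (ψ '' matrixEntries (universalTuple F e))) L := by rwa [hentries]
  have htrdeg_lt := lift_trdeg_lt_lift_trdeg_of_not_injective hψ_not_inj
    (matrixEntries (universalTuple F e))
    (htrdeg_le.trans_lt Cardinal.natCast_lt_aleph0)
  refine htrdeg_lt.not_ge ((Cardinal.lift_le.mpr htrdeg_le).trans ?_)
  simpa only [Cardinal.lift_natCast] using Cardinal.lift_le.mpr htrdeg

theorem not_isPrime_radical_commutatorIdeal_of_equiv {n k : ℕ} [DecidableEq m]
    (ε : m ≃ Fin n) {L : Type*} [CommRing L] [IsDomain L] [Algebra F L]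
    (e : Fin (k + 1) × Fin n × Fin n ≃ σ) {x : Fin (k + 1) → Matrix m m L}
    (hx : ∀ s t, Commute (x s) (x t)) {p : Polynomial L} (hp : p ≠ 0) (hdeg : p.natDegree < n)
    (hpx : Polynomial.aeval (x 0) p = 0)
    [halg : Algebra.IsAlgebraic (Algebra.adjoin F (matrixEntries x)) L]
    (htrdeg : (n * n + k * n : ℕ) ≤ Algebra.trdeg F L) :
    ¬ (commutatorIdeal (genericTuple F e)).radical.IsPrime := by
  let ρ := reindexAlgEquiv L L ε
  have hρpx : Polynomial.aeval (ρ (x 0)) p = 0 := by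
    rw [Polynomial.aeval_algHom_apply, hpx, map_zero]
  have : Algebra.IsAlgebraic (Algebra.adjoin F (matrixEntries fun t => ρ (x t))) L :=
    (matrixEntries_reindex ε x).symm ▸ halg
  exact not_isPrime_radical_commutatorIdeal e (fun s t => (hx s t).map ρ) hp hdeg hρpx htrdeg

end CommutatorIdeal

section LeftKernel

variable {ι l m n R : Type*}

/-- A family of matrices has trivial left kernel if only the zero row vector is annihilated by all
of them. This is what makes a matrix `S` recoverable from the products `S * W t`. -/
def HasTrivialLeftKernel [Fintype m] [NonUnitalNonAssocSemiring R] (W : ι → Matrix m n R) : Prop :=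
  ∀ v : m → R, (∀ t, v ᵥ* W t = 0) → v = 0

lemma exists_mul_eq_one_of_vecMul_injective {K : Type*} [Field K] [Fintype m] [Fintype n]
    [DecidableEq m] {W : Matrix m n K} (hW : Function.Injective W.vecMulLinear) :
    ∃ W' : Matrix n m K, W * W' = 1 := by
  classical
  obtain ⟨g, hg⟩ := (toLin' Wᵀ).exists_leftInverse_of_injective
    (LinearMap.ker_eq_bot.mpr fun v w h => hW (by simpa [mulVec_transpose] using h))
  refine ⟨(LinearMap.toMatrix' g)ᵀ, transpose_injective ?_⟩
  rw [transpose_mul, transpose_transpose, transpose_one, ← LinearMap.toMatrix'_id, ← hg,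
    LinearMap.toMatrix'_comp, LinearMap.toMatrix'_toLin']

lemma HasTrivialLeftKernel.mem_matrix [Finite ι] [Fintype m] [Finite n] {F L : Type*} [Field F]
    [Field L] [Algebra F L] {G : IntermediateField F L} {W : ι → Matrix m n L}
    (hW : HasTrivialLeftKernel W) (hWG : ∀ t, W t ∈ (G : Set L).matrix) {S : Matrix l m L}
    (hSW : ∀ t, S * W t ∈ (G : Set L).matrix) : S ∈ (G : Set L).matrix := by
  classical
  have := Fintype.ofFinite ι
  have := Fintype.ofFinite n
  let U : Matrix m (ι × n) G := of fun i p => ⟨W p.1 i p.2, hWG p.1 i p.2⟩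
  have hU : Function.Injective U.vecMulLinear := by
    refine (injective_iff_map_eq_zero _).mpr fun v hv => ?_
    have hv' : algebraMap G L ∘ v = 0 := hW _ fun t => funext fun j =>
      ((algebraMap G L).map_vecMul U v (t, j)).symm.trans <|
        (congrArg (algebraMap G L) (congrFun hv (t, j))).trans (map_zero _)
    exact funext fun i => Subtype.ext (congrFun hv' i)
  obtain ⟨U', hU'⟩ := exists_mul_eq_one_of_vecMul_injective hU
  have hSU : S * U.map (algebraMap G L) ∈ (G : Set L).matrix := fun i p => hSW p.1 i p.2
  have hS : S = S * U.map (algebraMap G L) * U'.map (algebraMap G L) := by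
    rw [Matrix.mul_assoc, ← Matrix.map_mul, hU', Matrix.map_one _ (map_zero _) (map_one _),
      Matrix.mul_one]
  rw [hS]
  exact mul_mem_matrix hSU fun i j => (U' i j).2

variable {F : Type*} [CommRing F] [Nontrivial F] [CommRing R] [Algebra F R] [Fintype m]

lemma det_ne_zero_of_algebraicIndependent [DecidableEq m] {A : Matrix m m R}
    (hA : AlgebraicIndependent F fun p : m × m => A p.1 p.2) : A.det ≠ 0 := by
  rw [← mvPolynomialX_mapMatrix_aeval F A, ← AlgHom.map_det]
  exact (map_ne_zero_iff _ hA).mpr (det_mvPolynomialX_ne_zero m F)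

lemma hasTrivialLeftKernel_of_algebraicIndependent [IsDomain R] [Fintype ι] [Fintype n]
    (hcard : Fintype.card m ≤ Fintype.card ι * Fintype.card n) {W : ι → Matrix m n R}
    (hW : AlgebraicIndependent F fun p : ι × m × n => W p.1 p.2.1 p.2.2) :
    HasTrivialLeftKernel W := by
  classical
  obtain ⟨f⟩ : Nonempty (m ↪ ι × n) :=
    Function.Embedding.nonempty_of_card_le (by rwa [Fintype.card_prod])
  intro v hv
  refine eq_zero_of_vecMul_eq_zero (M := of fun i j => W (f j).1 i (f j).2)
    (det_ne_zero_of_algebraicIndependent (F := F) ?_) (funext fun j => congrFun (hv _) (f j).2)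
  refine hW.comp (fun p : m × m => ((f p.2).1, p.1, (f p.2).2)) fun p q h => ?_
  simp only [Prod.mk.injEq] at h
  exact Prod.ext h.2.1 (f.injective (Prod.ext h.1 h.2.2))

end LeftKernel

section BlockTriangular

variable {α β γ m n R : Type*} [CommRing R]

section Shear

variable [Fintype m] [Fintype n] [DecidableEq m] [DecidableEq n]

/-- The block unitriangular matrix `[1, s; 0, 1]`, as a unit. -/
def shear (s : Matrix m n R) : (Matrix (m ⊕ n) (m ⊕ n) R)ˣ where
  val := fromBlocks 1 s 0 1
  inv := fromBlocks 1 (-s) 0 1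
  val_inv := by simp [fromBlocks_multiply]
  inv_val := by simp [fromBlocks_multiply]

lemma shear_conj_fromBlocks_zero_zero (s : Matrix m n R) (K : Matrix n m R) (H : Matrix n n R) :
    (shear s).val * fromBlocks 0 0 K H * (shear s)⁻¹.val
      = fromBlocks (s * K) (s * (H - K * s)) K (H - K * s) := by
  simp [shear, Units.inv_mk, fromBlocks_multiply, Matrix.mul_sub, neg_add_eq_sub, Matrix.mul_assoc]

lemma shear_mul_fromRows (s : Matrix m n R) (A : Matrix m α R) (B : Matrix n α R) :
    (shear s).val * fromRows A B = fromRows (A + s * B) B := by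
  simp [shear, fromBlocks_mul_fromRows]

end Shear

lemma vecMul_fromCols_eq_zero_iff [Fintype m] {v : m → R} {K : Matrix m α R} {H : Matrix m β R} :
    v ᵥ* fromCols K H = 0 ↔ v ᵥ* K = 0 ∧ v ᵥ* H = 0 := by
  simp [vecMul_fromCols, funext_iff]

lemma mem_matrix_of_shear_conj_mem_matrix {ι F L : Type*} [Finite ι] [Field F] [Field L]
    [Algebra F L] [Fintype m] [Fintype n] [DecidableEq m] [DecidableEq n]
    {G : IntermediateField F L} {s : Matrix m n L} {K : ι → Matrix n m L} {H : ι → Matrix n n L}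
    (hker : HasTrivialLeftKernel fun t => fromCols (K t) (H t))
    (hG : ∀ t, (shear s).val * fromBlocks 0 0 (K t) (H t) * (shear s)⁻¹.val
      ∈ (G : Set L).matrix) :
    s ∈ (G : Set L).matrix ∧ (∀ t, K t ∈ (G : Set L).matrix) ∧ ∀ t, H t ∈ (G : Set L).matrix := by
  simp only [shear_conj_fromBlocks_zero_zero] at hG
  have hK (t) : K t ∈ (G : Set L).matrix := fun i j => hG t (.inr i) (.inl j)
  have hHKs (t) : H t - K t * s ∈ (G : Set L).matrix := fun i j => hG t (.inr i) (.inr j)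
  have hker' : HasTrivialLeftKernel fun t => fromCols (K t) (H t - K t * s) := by
    refine fun v hv => hker v fun t => ?_
    obtain ⟨hvK, hvH⟩ := vecMul_fromCols_eq_zero_iff.mp (hv t)
    rw [vecMul_sub, ← vecMul_vecMul, hvK, zero_vecMul, sub_zero] at hvH
    exact vecMul_fromCols_eq_zero_iff.mpr ⟨hvK, hvH⟩
  have hs : s ∈ (G : Set L).matrix := by
    refine hker'.mem_matrix (fun t i => Sum.rec (hK t i) (hHKs t i)) fun t => ?_
    rw [mul_fromCols]
    exact fun i => Sum.rec (fun j => hG t (.inl i) (.inl j)) fun j => hG t (.inl i) (.inr j)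
  refine ⟨hs, hK, fun t => ?_⟩
  rw [← sub_add_cancel (H t) (K t * s)]
  exact fun i j => add_mem (hHKs t i j) (mul_mem_matrix (hK t) hs i j)

lemma hasTrivialLeftKernel_shear_mul {ι : Type*} [Fintype β] [Fintype γ] [DecidableEq β]
    [DecidableEq γ] (r : Matrix β γ R) {A : ι → Matrix β α R} {B : ι → Matrix γ α R}
    {C : ι → Matrix γ β R} (hA : HasTrivialLeftKernel A) (hC : HasTrivialLeftKernel C) :
    HasTrivialLeftKernel fun t => fromCols ((shear r).val * fromRows (A t) (B t))
      ((shear r).val * fromBlocks 0 0 (C t) 0 * (shear r)⁻¹.val) := by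
  intro v hv
  obtain ⟨w, rfl⟩ : ∃ w, w ᵥ* (shear r)⁻¹.val = v := ⟨v ᵥ* (shear r).val, by simp⟩
  obtain ⟨a, b, rfl⟩ : ∃ a b, Sum.elim a b = w := ⟨_, _, Sum.elim_comp_inl_inr w⟩
  have hAB (t) : a ᵥ* A t + b ᵥ* B t = 0 := by
    simpa [← Matrix.mul_assoc] using (vecMul_fromCols_eq_zero_iff.mp (hv t)).1
  have hbC (t) : b ᵥ* C t = 0 := by
    have hconj := congrArg (· ᵥ* (shear r).val) (vecMul_fromCols_eq_zero_iff.mp (hv t)).2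
    simp only [vecMul_vecMul, Matrix.mul_assoc, Units.inv_mul, Units.inv_mul_cancel_left,
      Matrix.mul_one, zero_vecMul, vecMul_fromBlocks] at hconj
    exact funext fun j => by simpa using congrFun hconj (.inl j)
  obtain rfl : b = 0 := hC b hbC
  obtain rfl : a = 0 := hA a fun t => by simpa using hAB t
  simp

variable [Fintype α] [Fintype β] [Fintype γ]

/-- The strictly block lower triangular matrix `[0, 0, 0; A, 0, 0; B, C, 0]`. -/
def nilpotentBlock (A : Matrix β α R) (B : Matrix γ α R) (C : Matrix γ β R) :
    Matrix (α ⊕ (β ⊕ γ)) (α ⊕ (β ⊕ γ)) R :=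
  fromBlocks 0 0 (fromRows A B) (fromBlocks 0 0 C 0)

lemma nilpotentBlock_mul (A A' : Matrix β α R) (B B' : Matrix γ α R) (C C' : Matrix γ β R) :
    nilpotentBlock A B C * nilpotentBlock A' B' C'
      = fromBlocks 0 0 (fromRows 0 (C * A')) 0 := by
  simp [nilpotentBlock, fromBlocks_multiply, fromBlocks_mul_fromRows]

lemma commute_nilpotentBlock {A A' : Matrix β α R} {B B' : Matrix γ α R} {C C' : Matrix γ β R}
    (h : C * A' = C' * A) : Commute (nilpotentBlock A B C) (nilpotentBlock A' B' C') := by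
  rw [Commute, SemiconjBy, nilpotentBlock_mul, nilpotentBlock_mul, h]

variable [DecidableEq α] [DecidableEq β] [DecidableEq γ]

lemma nilpotentBlock_pow_three (A : Matrix β α R) (B : Matrix γ α R) (C : Matrix γ β R) :
    nilpotentBlock A B C ^ 3 = 0 := by
  rw [pow_succ, sq, nilpotentBlock_mul]
  simp [nilpotentBlock, fromBlocks_multiply]

/-- The block unitriangular matrix `[1, s; 0, 1] * [1, 0; 0, [1, r; 0, 1]]`, as a unit. -/
def flagShear (s : Matrix α (β ⊕ γ) R) (r : Matrix β γ R) :
    (Matrix (α ⊕ (β ⊕ γ)) (α ⊕ (β ⊕ γ)) R)ˣ :=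
  shear s * ⟨fromBlocks 1 0 0 (shear r).val, fromBlocks 1 0 0 (shear r)⁻¹.val,
    by simp [fromBlocks_multiply], by simp [fromBlocks_multiply]⟩

lemma flagShear_conj_nilpotentBlock (s : Matrix α (β ⊕ γ) R) (r : Matrix β γ R)
    (A : Matrix β α R) (B : Matrix γ α R) (C : Matrix γ β R) :
    (flagShear s r).val * nilpotentBlock A B C * (flagShear s r)⁻¹.val
      = (shear s).val * fromBlocks 0 0 ((shear r).val * fromRows A B)
          ((shear r).val * fromBlocks 0 0 C 0 * (shear r)⁻¹.val) * (shear s)⁻¹.val := by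
  have hinner : fromBlocks 1 0 0 (shear r).val * nilpotentBlock A B C
      * fromBlocks 1 0 0 (shear r)⁻¹.val = fromBlocks 0 0 ((shear r).val * fromRows A B)
        ((shear r).val * fromBlocks 0 0 C 0 * (shear r)⁻¹.val) := by
    simp [nilpotentBlock, fromBlocks_multiply]
  rw [← hinner]
  simp only [flagShear, _root_.mul_inv_rev, Units.val_mul, Units.inv_mk, Matrix.mul_assoc]

lemma mem_matrix_of_flagShear_conj_mem_matrix {ι F L : Type*} [Finite ι] [Field F] [Field L]
    [Algebra F L] {G : IntermediateField F L} {s : Matrix α (β ⊕ γ) L} {r : Matrix β γ L}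
    {A : ι → Matrix β α L} {B : ι → Matrix γ α L} {C : ι → Matrix γ β L}
    (hA : HasTrivialLeftKernel A) (hC : HasTrivialLeftKernel C)
    (hG : ∀ t, (flagShear s r).val * nilpotentBlock (A t) (B t) (C t) * (flagShear s r)⁻¹.val
      ∈ (G : Set L).matrix) :
    s ∈ (G : Set L).matrix ∧ r ∈ (G : Set L).matrix ∧ (∀ t, A t ∈ (G : Set L).matrix) ∧
      (∀ t, B t ∈ (G : Set L).matrix) ∧ ∀ t, C t ∈ (G : Set L).matrix := by
  simp only [flagShear_conj_nilpotentBlock] at hG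
  obtain ⟨hs, hAB, hC0⟩ :=
    mem_matrix_of_shear_conj_mem_matrix (hasTrivialLeftKernel_shear_mul r hA hC) hG
  obtain ⟨hr, hC', -⟩ := mem_matrix_of_shear_conj_mem_matrix (H := 0)
    (fun v hv => hC v fun t => (vecMul_fromCols_eq_zero_iff.mp (hv t)).1) hC0
  simp only [shear_mul_fromRows] at hAB
  have hB (t) : B t ∈ (G : Set L).matrix := fun i j => hAB t (.inr i) j
  refine ⟨hs, hr, fun t i j => ?_, hB, hC'⟩
  rw [← add_sub_cancel_right (A t) (r * B t)]
  exact sub_mem (hAB t (.inl i) j) (mul_mem_matrix hr (hB t) i j)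

lemma mem_of_isNilpotent_sub_smul_one {F L : Type*} [Field F] [Field L] [Algebra F L]
    {G : IntermediateField F L} [IsIntegrallyClosedIn G L] [Fintype m] [DecidableEq m] [Nonempty m]
    {M : Matrix m m L} (hM : M ∈ (G : Set L).matrix) {c : L} (hnil : IsNilpotent (M - c • 1)) :
    c ∈ G := by
  let N : Matrix m m G := of fun i j => ⟨M i j, hM i j⟩
  have hroot : M.charpoly.eval c = 0 := by
    rw [eval_charpoly, scalar_apply, ← smul_one_eq_diagonal]
    by_contra hdet
    refine hnil.neg.not_isUnit ?_
    rwa [isUnit_iff_isUnit_det, isUnit_iff_ne_zero, neg_sub]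
  have hc : IsIntegral G c := ⟨N.charpoly, N.charpoly_monic, by
    rw [← Polynomial.eval_map, ← N.charpoly_map]
    exact hroot⟩
  obtain ⟨y, rfl⟩ := IsIntegrallyClosedIn.isIntegral_iff.mp hc
  exact y.2

end BlockTriangular

section SymmetricSolution

variable {α γ R : Type*} [CommRing R] [Fintype α] [DecidableEq α]

lemma fromCols_mul_inv_mul {A₀ A₁ : Matrix (α ⊕ α) α R} (hA : IsUnit (fromCols A₀ A₁).det)
    (P Q : Matrix γ α R) :
    fromCols P Q * (fromCols A₀ A₁)⁻¹ * A₀ = P ∧ fromCols P Q * (fromCols A₀ A₁)⁻¹ * A₁ = Q := by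
  rw [← fromCols_ext_iff, ← mul_fromCols, nonsing_inv_mul_cancel_right _ _ hA]

/-- For a triple `A` with `[A 0, A 1]` invertible, the triple `C` with `C i * A j = C j * A i` for
all `i` and `j` that is determined by `C 0 * A 0 = D 0`, `C 0 * A 1 = D 1` and `C 1 * A 1 = D 2`. -/
noncomputable def symmetricSolution (A : Fin 3 → Matrix (α ⊕ α) α R) (D : Fin 3 → Matrix γ α R) :
    Fin 3 → Matrix γ (α ⊕ α) R :=
  let C₀ := fromCols (D 0) (D 1) * (fromCols (A 0) (A 1))⁻¹
  let C₁ := fromCols (D 1) (D 2) * (fromCols (A 0) (A 1))⁻¹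
  ![C₀, C₁, fromCols (C₀ * A 2) (C₁ * A 2) * (fromCols (A 0) (A 1))⁻¹]

variable {A : Fin 3 → Matrix (α ⊕ α) α R}

lemma symmetricSolution_mul_comm (hA : IsUnit (fromCols (A 0) (A 1)).det)
    (D : Fin 3 → Matrix γ α R) (i j : Fin 3) :
    symmetricSolution A D i * A j = symmetricSolution A D j * A i := by
  fin_cases i <;> fin_cases j <;> simp [symmetricSolution, fromCols_mul_inv_mul hA]

lemma exists_eq_symmetricSolution_mul (hA : IsUnit (fromCols (A 0) (A 1)).det)
    (D : Fin 3 → Matrix γ α R) (t : Fin 3) : ∃ i j, D t = symmetricSolution A D i * A j := by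
  fin_cases t
  · exact ⟨0, 0, (fromCols_mul_inv_mul hA _ _).1.symm⟩
  · exact ⟨0, 1, (fromCols_mul_inv_mul hA _ _).2.symm⟩
  · exact ⟨1, 1, (fromCols_mul_inv_mul hA _ _).2.symm⟩

lemma hasTrivialLeftKernel_symmetricSolution [Fintype γ] (hA : IsUnit (fromCols (A 0) (A 1)).det)
    {D : Fin 3 → Matrix γ α R} (hD : HasTrivialLeftKernel D) :
    HasTrivialLeftKernel (symmetricSolution A D) := by
  refine fun v hv => hD v fun t => ?_
  obtain ⟨i, j, h⟩ := exists_eq_symmetricSolution_mul hA D t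
  rw [h, ← vecMul_vecMul, hv, zero_vecMul]

end SymmetricSolution

section FlagTuple

/-- Labels of the free parameters of `flagTuple`: the scalars, the blocks `A` and `B`, the data `D`
of `symmetricSolution`, and the entries of the conjugating `flagShear s r`. -/
abbrev FlagParam (α γ : Type*) : Type _ :=
  Fin 3 ⊕ (Fin 3 × (α ⊕ α) × α) ⊕ (Fin 3 × γ × α) ⊕ (Fin 3 × γ × α) ⊕
    ((α ⊕ α) × γ) ⊕ (α × ((α ⊕ α) ⊕ γ))

variable {α γ L : Type*}

lemma card_flagParam [Fintype α] [Fintype γ] :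
    Fintype.card (FlagParam α γ)
      = 3 + 8 * Fintype.card α ^ 2 + 9 * Fintype.card α * Fintype.card γ := by
  simp only [Fintype.card_sum, Fintype.card_prod, Fintype.card_fin]
  ring

namespace FlagParam

variable (w : FlagParam α γ → L)

/-- The eigenvalue of the `t`-th matrix of `flagTuple w`. -/
def c (t : Fin 3) : L := w (.inl t)

/-- The blocks of `flagTuple w` in position `(2, 1)`. -/
def A (t : Fin 3) : Matrix (α ⊕ α) α L := of fun i j => w (.inr (.inl (t, i, j)))

/-- The blocks of `flagTuple w` in position `(3, 1)`. -/
def B (t : Fin 3) : Matrix γ α L := of fun i j => w (.inr (.inr (.inl (t, i, j))))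

/-- The data that determine the blocks of `flagTuple w` in position `(3, 2)`. -/
def D (t : Fin 3) : Matrix γ α L := of fun i j => w (.inr (.inr (.inr (.inl (t, i, j)))))

/-- The inner parameter of the conjugating `flagShear`. -/
def r : Matrix (α ⊕ α) γ L := of fun i j => w (.inr (.inr (.inr (.inr (.inl (i, j))))))

/-- The outer parameter of the conjugating `flagShear`. -/
def s : Matrix α ((α ⊕ α) ⊕ γ) L := of fun i j => w (.inr (.inr (.inr (.inr (.inr (i, j))))))

end FlagParam

open FlagParam

lemma isUnit_det_fromCols_A [Fintype α] [DecidableEq α] {F : Type*} [Field F] [Field L]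
    [Algebra F L] {w : FlagParam α γ → L} (hw : AlgebraicIndependent F w) :
    IsUnit (fromCols (A w 0) (A w 1)).det := by
  refine (det_ne_zero_of_algebraicIndependent (F := F) ?_).isUnit
  let f : (α ⊕ α) × (α ⊕ α) → FlagParam α γ := fun p =>
    .inr (.inl (p.2.elim (fun j => (0, p.1, j)) fun j => (1, p.1, j)))
  have hf : Function.Injective f := by
    rintro ⟨i, j | j⟩ ⟨i', j' | j'⟩ h <;> simp_all [f]
  convert hw.comp f hf with p
  obtain ⟨i, j | j⟩ := p <;> rfl

variable [Fintype α] [Fintype γ] [DecidableEq α] [DecidableEq γ]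

/-- The triple of matrices `c t + u * N t * u⁻¹` where `N t = [0, 0, 0; A t, 0, 0; B t, C t, 0]`,
`C` is the symmetric solution and `u` is block unitriangular, with all parameters read off `w`. -/
noncomputable def flagTuple [CommRing L] (w : FlagParam α γ → L) (t : Fin 3) :
    Matrix (α ⊕ ((α ⊕ α) ⊕ γ)) (α ⊕ ((α ⊕ α) ⊕ γ)) L :=
  c w t • 1 + (flagShear (s w) (r w)).val
    * nilpotentBlock (A w t) (B w t) (symmetricSolution (A w) (D w) t)
    * (flagShear (s w) (r w))⁻¹.val

section CommRing

variable [CommRing L] {w : FlagParam α γ → L}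

lemma commute_flagTuple (hA : IsUnit (fromCols (A w 0) (A w 1)).det) (t t' : Fin 3) :
    Commute (flagTuple w t) (flagTuple w t') := by
  have hscalar (a : L) (M : Matrix (α ⊕ ((α ⊕ α) ⊕ γ)) (α ⊕ ((α ⊕ α) ⊕ γ)) L) :
      Commute (a • 1) M := (Commute.one_left M).smul_left a
  refine .add_left (hscalar _ _) (.add_right (hscalar _ _).symm ?_)
  exact (commute_nilpotentBlock (symmetricSolution_mul_comm hA _ _ _)).map
    (MulDistribMulAction.toMonoidHom _ (ConjAct.toConjAct (flagShear (s w) (r w))))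

lemma flagTuple_sub_pow_three (w : FlagParam α γ → L) (t : Fin 3) :
    (flagTuple w t - c w t • 1) ^ 3 = 0 := by
  rw [flagTuple, add_sub_cancel_left, Units.conj_pow, nilpotentBlock_pow_three, Matrix.mul_zero,
    Matrix.zero_mul]

end CommRing

variable {F : Type*} [Field F] [Field L] [Algebra F L] {w : FlagParam α γ → L}

lemma mem_of_flagTuple_mem_matrix [Nonempty α] (hγ : Fintype.card γ ≤ 3 * Fintype.card α)
    (hw : AlgebraicIndependent F w) {E : IntermediateField F L} [IsIntegrallyClosedIn E L]
    (hx : ∀ t, flagTuple w t ∈ (E : Set L).matrix) (i : FlagParam α γ) : w i ∈ E := by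
  have hA := isUnit_det_fromCols_A hw
  have hkerA : HasTrivialLeftKernel (A w) := hasTrivialLeftKernel_of_algebraicIndependent (F := F)
    (by simp only [Fintype.card_sum, Fintype.card_fin]; lia)
    (hw.comp (fun p => .inr (.inl p)) (Sum.inr_injective.comp Sum.inl_injective))
  have hkerD : HasTrivialLeftKernel (D w) := hasTrivialLeftKernel_of_algebraicIndependent (F := F)
    (by simpa using hγ)
    (hw.comp (fun p => .inr (.inr (.inr (.inl p)))) fun p q h => by simpa using h)
  have hc (t) : c w t ∈ E :=
    mem_of_isNilpotent_sub_smul_one (hx t) ⟨3, flagTuple_sub_pow_three w t⟩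
  have hN (t) : flagTuple w t - c w t • 1 ∈ (E : Set L).matrix := fun i j =>
    sub_mem (hx t i j) (mul_mem (hc t) (by rw [one_apply]; split_ifs <;> simp))
  simp only [flagTuple, add_sub_cancel_left] at hN
  obtain ⟨hs, hr, hAE, hBE, hCE⟩ := mem_matrix_of_flagShear_conj_mem_matrix hkerA
    (hasTrivialLeftKernel_symmetricSolution hA hkerD) hN
  have hDE (t) : D w t ∈ (E : Set L).matrix := by
    obtain ⟨i, j, h⟩ := exists_eq_symmetricSolution_mul hA (D w) t
    exact h ▸ mul_mem_matrix (hCE i) (hAE j)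
  rcases i with t | ⟨t, i, j⟩ | ⟨t, i, j⟩ | ⟨t, i, j⟩ | ⟨i, j⟩ | ⟨i, j⟩
  exacts [hc t, hAE t i j, hBE t i j, hDE t i j, hr i j, hs i j]

lemma isAlgebraic_adjoin_matrixEntries_flagTuple [Nonempty α]
    (hγ : Fintype.card γ ≤ 3 * Fintype.card α) (hw : IsTranscendenceBasis F w) :
    Algebra.IsAlgebraic (Algebra.adjoin F (matrixEntries (flagTuple w))) L := by
  let E := IntermediateField.adjoin F (matrixEntries (flagTuple w))
  let G : IntermediateField F L := (algebraicClosure E L).restrictScalars F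
  have : IsIntegrallyClosedIn G L :=
    inferInstanceAs (IsIntegrallyClosedIn (integralClosure E L) L)
  have hx (t) : flagTuple w t ∈ (G : Set L).matrix := fun i j =>
    (algebraicClosure E L).algebraMap_mem
      ⟨flagTuple w t i j, IntermediateField.subset_adjoin F _ ⟨(t, i, j), rfl⟩⟩
  have hwG (p) : IsAlgebraic (Algebra.adjoin F (matrixEntries (flagTuple w))) (w p) :=
    IntermediateField.isAlgebraic_adjoin_iff.mp <|
      mem_algebraicClosure_iff.mp (mem_of_flagTuple_mem_matrix hγ hw.1 hx p)
  refine ⟨fun y => .adjoin_of_forall_isAlgebraic (s := Set.range w) ?_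
    (hw.isAlgebraic.isAlgebraic y)⟩
  rintro _ ⟨⟨p, rfl⟩, -⟩
  exact hwG p

end FlagTuple

theorem not_isPrime_radical_commutatorIdeal_of_block_sizes {F σ : Type*} [Field F] {n a c : ℕ}
    (ha : 0 < a) (hca : c ≤ 3 * a) (hn : n = 3 * a + c) (hn3 : 3 < n)
    (hdim : n * n + 2 * n ≤ 3 + 8 * a ^ 2 + 9 * a * c) (e : Fin 3 × Fin n × Fin n ≃ σ) :
    ¬ (commutatorIdeal (genericTuple F e)).radical.IsPrime := by
  let P := FlagParam (Fin a) (Fin c)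
  let L := FractionRing (MvPolynomial P F)
  let w : P → L := algebraMap (MvPolynomial P F) L ∘ X
  have : Algebra.IsAlgebraic (MvPolynomial P F) L :=
    IsLocalization.isAlgebraic L (nonZeroDivisors (MvPolynomial P F))
  have hw : IsTranscendenceBasis F w := (IsTranscendenceBasis.mvPolynomial P F).algebraMap_comp
  have htrdeg : (n * n + 2 * n : ℕ) ≤ Algebra.trdeg F L := by
    have hcard := hw.lift_cardinalMk_eq_trdeg
    rw [Cardinal.mk_fintype, card_flagParam, Fintype.card_fin, Fintype.card_fin,
      Cardinal.lift_natCast, Cardinal.lift_uzero] at hcard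
    exact hcard ▸ Nat.cast_le.mpr hdim
  have : NeZero a := ⟨ha.ne'⟩
  have : Algebra.IsAlgebraic (Algebra.adjoin F (matrixEntries (flagTuple w))) L :=
    isAlgebraic_adjoin_matrixEntries_flagTuple (by simpa using hca) hw
  let p : Polynomial L := (Polynomial.X - Polynomial.C (FlagParam.c w 0)) ^ 3
  have hp : p ≠ 0 := pow_ne_zero 3 (Polynomial.X_sub_C_ne_zero _)
  have hdeg : p.natDegree < n := by simpa [p] using hn3
  have hpx : Polynomial.aeval (flagTuple w 0) p = 0 := by
    simp [p, Algebra.algebraMap_eq_smul_one, flagTuple_sub_pow_three]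
  have ε : Fin a ⊕ ((Fin a ⊕ Fin a) ⊕ Fin c) ≃ Fin n := Fintype.equivFinOfCardEq (by simp; lia)
  exact not_isPrime_radical_commutatorIdeal_of_equiv ε e
    (commute_flagTuple (isUnit_det_fromCols_A hw.1)) hp hdeg hpx htrdeg

-- With `c = n - 3 * a`, the right-hand side is largest at `a = 9 * n / 38`, close to `n / 4`.
lemma exists_block_sizes {n : ℕ} (hn : 29 ≤ n) :
    ∃ a c, 0 < a ∧ c ≤ 3 * a ∧ n = 3 * a + c ∧ n * n + 2 * n ≤ 3 + 8 * a ^ 2 + 9 * a * c := by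
  obtain ⟨a, r, hr, hr', rfl⟩ : ∃ a r, 1 ≤ r ∧ r ≤ 4 ∧ n = 4 * a + r :=
    ⟨(n - 1) / 4, (n - 1) % 4 + 1, by lia, by lia, by lia⟩
  have ha : 7 ≤ a := by lia
  refine ⟨a, a + r, by lia, by lia, by lia, ?_⟩
  interval_cases r <;> nlinarith

/-- The bijection labelling the entries of three `n × n` matrices by a sum of three copies of their
index set. -/
def tripleEquivSum (P : Type*) : Fin 3 × P ≃ P ⊕ P ⊕ P where
  toFun q := ![.inl q.2, .inr (.inl q.2), .inr (.inr q.2)] q.1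
  invFun := Sum.elim (0, ·) (Sum.elim (1, ·) (2, ·))
  left_inv := by
    rintro ⟨t, p⟩
    fin_cases t <;> rfl
  right_inv := by rintro (p | p | p) <;> rfl

lemma commutatorIdeal_triple {m R : Type*} [Fintype m] [CommRing R] (X Y Z : Matrix m m R) :
    commutatorIdeal ![X, Y, Z] = Ideal.span
      ({p | ∃ i j, p = (X * Y - Y * X) i j} ∪ {p | ∃ i j, p = (X * Z - Z * X) i j} ∪
        {p | ∃ i j, p = (Y * Z - Z * Y) i j}) := by
  refine le_antisymm (commutatorIdeal_le_iff.mpr fun s t hst i j => Ideal.subset_span ?_)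
    (Ideal.span_mono ?_)
  · obtain ⟨rfl, rfl⟩ | ⟨rfl, rfl⟩ | ⟨rfl, rfl⟩ :
        s = 0 ∧ t = 1 ∨ s = 0 ∧ t = 2 ∨ s = 1 ∧ t = 2 := by lia
    exacts [.inl (.inl ⟨i, j, rfl⟩), .inl (.inr ⟨i, j, rfl⟩), .inr ⟨i, j, rfl⟩]
  · rintro _ ((⟨i, j, rfl⟩ | ⟨i, j, rfl⟩) | ⟨i, j, rfl⟩)
    exacts [⟨0, 1, i, j, rfl⟩, ⟨0, 2, i, j, rfl⟩, ⟨1, 2, i, j, rfl⟩]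

theorem commuting_triples_variety_not_irreducible_general (F : Type*) [Field F]
    (n : ℕ) (hn : 29 ≤ n)
    (X Y Z : Matrix (Fin n) (Fin n)
      (MvPolynomial ((Fin n × Fin n) ⊕ (Fin n × Fin n) ⊕ (Fin n × Fin n)) F))
    (hX : ∀ i j, X i j = MvPolynomial.X (Sum.inl (i, j)))
    (hY : ∀ i j, Y i j = MvPolynomial.X (Sum.inr (Sum.inl (i, j))))
    (hZ : ∀ i j, Z i j = MvPolynomial.X (Sum.inr (Sum.inr (i, j))))
    (I : Ideal (MvPolynomial ((Fin n × Fin n) ⊕ (Fin n × Fin n) ⊕ (Fin n × Fin n)) F))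
    (hI : I = Ideal.span
      ({p | ∃ i j, p = (X * Y - Y * X) i j} ∪ {p | ∃ i j, p = (X * Z - Z * X) i j} ∪
        {p | ∃ i j, p = (Y * Z - Z * Y) i j})) :
    ¬ I.radical.IsPrime := by
  obtain ⟨a, c, ha, hca, hn', hdim⟩ := exists_block_sizes hn
  have hgeneric : genericTuple F (tripleEquivSum (Fin n × Fin n)) = ![X, Y, Z] := by
    ext1 t
    ext1 i j
    fin_cases t
    exacts [(hX i j).symm, (hY i j).symm, (hZ i j).symm]
  rw [hI, ← commutatorIdeal_triple, ← hgeneric]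
  exact not_isPrime_radical_commutatorIdeal_of_block_sizes ha hca hn' (by lia) hdim _

/-- Guralnick, Holbrook–Omladič: for `n ≥ 29` over an algebraically closed field of
characteristic zero, the variety `C(3,n)` of commuting triples of `n × n` matrices is
not irreducible; equivalently, the radical of the ideal generated by the entries of the
three pairwise commutators of generic matrices is not prime. -/
theorem commuting_triples_variety_not_irreducible (F : Type*) [Field F] [IsAlgClosed F]
    [CharZero F] (n : ℕ) (hn : 29 ≤ n)
    (X Y Z : Matrix (Fin n) (Fin n)
      (MvPolynomial ((Fin n × Fin n) ⊕ (Fin n × Fin n) ⊕ (Fin n × Fin n)) F))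
    (hX : ∀ i j, X i j = MvPolynomial.X (Sum.inl (i, j)))
    (hY : ∀ i j, Y i j = MvPolynomial.X (Sum.inr (Sum.inl (i, j))))
    (hZ : ∀ i j, Z i j = MvPolynomial.X (Sum.inr (Sum.inr (i, j))))
    (I : Ideal (MvPolynomial ((Fin n × Fin n) ⊕ (Fin n × Fin n) ⊕ (Fin n × Fin n)) F))
    (hI : I = Ideal.span
      ({p | ∃ i j, p = (X * Y - Y * X) i j} ∪ {p | ∃ i j, p = (X * Z - Z * X) i j} ∪
        {p | ∃ i j, p = (Y * Z - Z * Y) i j})) :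
    ¬ I.radical.IsPrime := by
  exact commuting_triples_variety_not_irreducible_general F n hn X Y Z hX hY hZ I hI
end
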